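/- arXiv:1602.03537 — 14 statements merged into one kernel-verified Lean document; each statement's English description precedes it below -/
import Mathlib

section
/- Let G be a finite group possessing at least one proper non-trivial subgroup, and let N_G denote the subgroup of G generated by all minimal subgroups of G. The following are equivalent: (i) Γ(G) has a dominating set of cardinality 1, i.e. there is a proper non-trivial subgroup of G intersecting every non-trivial subgroup of G non-trivially; (ii) N_G is a proper subgroup of G; (iii) N_G is a proper normal subgroup of G that has no complement in G (i.e. there is no subgroup H of G with H ∩ N_G = 1 and N_G H = G and H non-trivial... equivalently, the extension of N_G by G/N_G does not split). -/
/-- `D` is a dominating set of the intersection graph `Γ(G)` of the group `G`: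
every member of `D` is a proper non-trivial subgroup of `G`, and every proper
non-trivial subgroup of `G` either belongs to `D` or intersects some member of
`D` non-trivially. -/
def IsDomSet {G : Type*} [Group G] (D : Set (Subgroup G)) : Prop :=
  (∀ H ∈ D, H ≠ ⊥ ∧ H ≠ ⊤) ∧
    ∀ K : Subgroup G, K ≠ ⊥ → K ≠ ⊤ →
      K ∈ D ∨ ∃ W ∈ D, W ≠ K ∧ K ⊓ W ≠ ⊥

/-- The domination number `γ(G)`: the smallest cardinality of a dominating set
of the intersection graph `Γ(G)`. -/
noncomputable def domNumber (G : Type*) [Group G] : ℕ :=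
  sInf {n : ℕ | ∃ D : Set (Subgroup G), IsDomSet D ∧ D.ncard = n}

/-- For a finite group `G` with at least one proper non-trivial subgroup, with
`N` the subgroup generated by all minimal subgroups of `G`, the following are
equivalent: (i) `Γ(G)` has a dominating set of cardinality one, i.e. there is a
proper non-trivial subgroup intersecting every non-trivial subgroup non-trivially;
(ii) `N` is a proper subgroup; (iii) `N` is a proper normal subgroup having no
non-trivial complement in `G`. -/
theorem domNumber_eq_one_tfae {G : Type*} [Group G] [Finite G]
    (hG : ∃ K : Subgroup G, K ≠ ⊥ ∧ K ≠ ⊤)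
    (N : Subgroup G) (hN : N = ⨆ (A : Subgroup G) (_ : IsAtom A), A) :
    ((∃ H : Subgroup G, H ≠ ⊥ ∧ H ≠ ⊤ ∧ ∀ K : Subgroup G, K ≠ ⊥ → H ⊓ K ≠ ⊥) ↔
      N ≠ ⊤) ∧
    (N ≠ ⊤ ↔
      (N ≠ ⊤ ∧ N.Normal ∧
        ¬∃ H : Subgroup G, H ≠ ⊥ ∧ H ⊓ N = ⊥ ∧ N ⊔ H = ⊤)) := by
  have hle : ∀ A : Subgroup G, IsAtom A → A ≤ N := by
    intro A hA
    rw [hN]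
    exact le_iSup₂_of_le A hA le_rfl
  have hmeet : ∀ K : Subgroup G, K ≠ ⊥ → N ⊓ K ≠ ⊥ := by
    intro K hK h
    obtain ⟨A, hA, hAK⟩ := (eq_bot_or_exists_atom_le K).resolve_left hK
    exact hA.1 (le_bot_iff.mp (h ▸ le_inf (hle A hA) hAK))
  have hnormal : N.Normal := by
    constructor
    intro n hn g
    have key : N ≤ N.comap (MulAut.conj g).toMonoidHom := by
      conv_lhs => rw [hN]
      refine iSup₂_le fun A hA => ?_
      rw [← Subgroup.map_le_iff_le_comap]
      exact hle _ (((MulAut.conj g).mapSubgroup.isAtom_iff A).2 hA)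
    simpa using key hn
  refine ⟨⟨?_, ?_⟩, ⟨fun h => ⟨h, hnormal, ?_⟩, fun h => h.1⟩⟩
  · rintro ⟨H, -, hH, hK⟩ hT
    apply hH
    rw [eq_top_iff, ← hT, hN]
    refine iSup₂_le fun A hA => ?_
    rcases hA.le_iff.mp (inf_le_right : H ⊓ A ≤ A) with h | h
    · exact absurd h (hK A hA.1)
    · exact inf_eq_right.mp h
  · intro h
    refine ⟨N, ?_, h, hmeet⟩
    obtain ⟨K, hK, -⟩ := hG
    intro hb
    exact hmeet K hK (by rw [hb, bot_inf_eq])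
  · rintro ⟨H, hH, hi, -⟩
    exact hmeet H hH (by rw [inf_comm, hi])
end

section
/- If G is a finite simple group, then the intersection graph Γ(G) has no dominating set of cardinality 1; that is, there is no proper non-trivial subgroup H of G such that H intersects every proper non-trivial subgroup of G non-trivially. -/
/-- If `G` is a finite simple group, then the intersection graph `Γ(G)` has no
dominating set of cardinality one: no proper non-trivial subgroup of `G`
intersects every proper non-trivial subgroup of `G` non-trivially. -/
theorem simple_group_not_dominated_by_singleton {G : Type*} [Group G] [Finite G]
    (hs : IsSimpleGroup G) :
    ¬∃ H : Subgroup G, H ≠ ⊥ ∧ H ≠ ⊤ ∧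
      ∀ K : Subgroup G, K ≠ ⊥ → K ≠ ⊤ → H ⊓ K ≠ ⊥ := by
  rintro ⟨H, hb, ht, h⟩
  have key : ∀ (p : ℕ) (y : G), p.Prime → orderOf y = p → y ∈ H := by
    intro p y hp hy
    have hcard : Nat.card (Subgroup.zpowers y) = p := by rw [Nat.card_zpowers, hy]
    have hne : Subgroup.zpowers y ≠ ⊥ := by
      intro h0
      rw [h0, Subgroup.card_bot] at hcard
      exact hp.one_lt.ne hcard
    have hint : H ⊓ Subgroup.zpowers y ≠ ⊥ := by
      by_cases hK : Subgroup.zpowers y = ⊤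
      · rw [hK, inf_top_eq]; exact hb
      · exact h _ hne hK
    haveI : Fact (Nat.card (Subgroup.zpowers y)).Prime := ⟨by rw [hcard]; exact hp⟩
    rcases Subgroup.eq_bot_or_eq_top_of_prime_card (H.subgroupOf (Subgroup.zpowers y)) with h1 | h1
    · exact absurd (disjoint_iff.mp (Subgroup.subgroupOf_eq_bot.mp h1)) hint
    · exact Subgroup.subgroupOf_eq_top.mp h1 (Subgroup.mem_zpowers y)
  obtain ⟨p, hp, hpd⟩ := Nat.exists_prime_and_dvd (n := Nat.card G)
    (Finite.one_lt_card (α := G)).ne'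
  haveI : Fact p.Prime := ⟨hp⟩
  obtain ⟨x, hx⟩ := exists_prime_orderOf_dvd_card' p hpd
  have hxc : x ∈ H.normalCore := fun b => key p _ hp (by
    rw [← hx, ← MulAut.conj_apply]
    exact orderOf_injective (MulAut.conj b).toMonoidHom (MulAut.conj b).injective x)
  rcases (Subgroup.normalCore_normal H).eq_bot_or_eq_top with h1 | h1
  · rw [h1, Subgroup.mem_bot] at hxc
    rw [hxc, orderOf_one] at hx
    exact hp.one_lt.ne hx
  · exact ht (top_le_iff.mp (h1 ▸ Subgroup.normalCore_le H))
end

section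
/- Let G be a finite group, let D be a dominating set of the intersection graph Γ(G), and let H be a subgroup of G that itself has at least one proper non-trivial subgroup. If no member of D contains H, then γ(H) ≤ |D|, i.e. the intersection graph Γ(H) has a dominating set of cardinality at most |D|. -/
/-- If `D` is a dominating set of `Γ(G)`, `H` a subgroup of the finite group `G`
having a proper non-trivial subgroup, and no member of `D` contains `H`, then
`γ(H) ≤ |D|`. -/
theorem domNumber_subgroup_le {G : Type*} [Group G] [Finite G]
    (D : Set (Subgroup G)) (hD : IsDomSet D) (H : Subgroup G)
    (hH : ∃ K : Subgroup H, K ≠ ⊥ ∧ K ≠ ⊤)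
    (hnc : ∀ W ∈ D, ¬H ≤ W) :
    domNumber H ≤ D.ncard := by
  classical
  have hdom : IsDomSet (((fun W : Subgroup G => W.subgroupOf H) '' D) \ {⊥}) := by
    refine ⟨?_, ?_⟩
    · rintro _ ⟨⟨W, hW, rfl⟩, hb⟩
      refine ⟨hb, fun h => hnc W hW ?_⟩
      exact Subgroup.subgroupOf_eq_top.1 h
    · intro K hK hK'
      have h1 : K.map H.subtype ≠ ⊥ := fun h =>
        hK ((Subgroup.map_eq_bot_iff_of_injective K H.subtype_injective).1 h)
      have h2 : K.map H.subtype ≠ ⊤ := by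
        intro h
        apply hK'
        rw [eq_top_iff]
        intro x _
        have hx : (x : G) ∈ K.map H.subtype := by rw [h]; trivial
        obtain ⟨y, hy, hxy⟩ := hx
        have : y = x := Subtype.ext hxy
        exact this ▸ hy
      have h3 : ∃ W ∈ D, K.map H.subtype ⊓ W ≠ ⊥ := by
        rcases hD.2 _ h1 h2 with h | ⟨W, hW, _, h⟩
        · exact ⟨_, h, by rwa [inf_idem]⟩
        · exact ⟨W, hW, h⟩
      obtain ⟨W, hW, h⟩ := h3
      obtain ⟨⟨x, hx⟩, hx1⟩ := (Subgroup.ne_bot_iff_exists_ne_one).1 h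
      obtain ⟨⟨y, hy, rfl⟩, hxW⟩ := hx
      have hy1 : y ≠ 1 := by
        rintro rfl
        exact hx1 (Subtype.ext (map_one _))
      have hyW : y ∈ W.subgroupOf H := hxW
      have hmeet : K ⊓ W.subgroupOf H ≠ ⊥ := fun h0 =>
        hy1 (Subgroup.mem_bot.1 (h0 ▸ (⟨hy, hyW⟩ : y ∈ K ⊓ W.subgroupOf H)))
      have hmem : W.subgroupOf H ∈ ((fun W : Subgroup G => W.subgroupOf H) '' D) \ {⊥} := by
        refine ⟨⟨W, hW, rfl⟩, fun h0 => hmeet ?_⟩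
        rw [Set.mem_singleton_iff.1 h0, inf_bot_eq]
      by_cases he : W.subgroupOf H = K
      · exact Or.inl (he ▸ hmem)
      · exact Or.inr ⟨_, hmem, he, hmeet⟩
  calc domNumber H ≤ _ := Nat.sInf_le ⟨_, hdom, rfl⟩
    _ ≤ _ := Set.ncard_le_ncard Set.diff_subset (Set.toFinite _)
    _ ≤ D.ncard := Set.ncard_image_le (Set.toFinite _)
end

section
/- Let G be a finite group and N a normal subgroup of G such that the quotient G/N has at least one proper non-trivial subgroup. If D is a dominating set of Γ(G/N), then the corresponding set {W : N < W < G and W/N ∈ D} of proper subgroups of G strictly containing N is a dominating set of Γ(G) of the same cardinality as D. In particular, γ(G) ≤ γ(G/N). -/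
theorem domSet_aux_eq {G : Type*} [Group G] (N : Subgroup G) [N.Normal]
    (D : Set (Subgroup (G ⧸ N))) (hD : IsDomSet D) :
    {W : Subgroup G | N < W ∧ W ≠ ⊤ ∧ W.map (QuotientGroup.mk' N) ∈ D} =
      (Subgroup.comap (QuotientGroup.mk' N)) '' D := by
  have hs := QuotientGroup.mk'_surjective N
  ext W
  constructor
  · rintro ⟨h1, h2, h3⟩
    refine ⟨_, h3, ?_⟩
    rw [Subgroup.comap_map_eq, QuotientGroup.ker_mk', sup_eq_left]
    exact h1.le
  · rintro ⟨V, hV, rfl⟩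
    obtain ⟨hb, ht⟩ := hD.1 V hV
    refine ⟨?_, ?_, ?_⟩
    · have h : (⊥ : Subgroup (G ⧸ N)) < V := bot_lt_iff_ne_bot.2 hb
      have := (Subgroup.comap_lt_comap_of_surjective hs).2 h
      rwa [MonoidHom.comap_bot, QuotientGroup.ker_mk'] at this
    · intro h
      apply ht
      rw [← Subgroup.map_comap_eq_self_of_surjective hs V, h,
        Subgroup.map_top_of_surjective _ hs]
    · rwa [Subgroup.map_comap_eq_self_of_surjective hs V]

theorem domSet_aux {G : Type*} [Group G] (N : Subgroup G) [N.Normal]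
    (hQ : ∃ K : Subgroup (G ⧸ N), K ≠ ⊥ ∧ K ≠ ⊤)
    (D : Set (Subgroup (G ⧸ N))) (hD : IsDomSet D) :
    IsDomSet {W : Subgroup G | N < W ∧ W ≠ ⊤ ∧ W.map (QuotientGroup.mk' N) ∈ D} ∧
      {W : Subgroup G | N < W ∧ W ≠ ⊤ ∧ W.map (QuotientGroup.mk' N) ∈ D}.ncard =
        D.ncard := by
  have hs := QuotientGroup.mk'_surjective N
  have hne : ∃ V, V ∈ D := by
    obtain ⟨K, hb, ht⟩ := hQ
    rcases hD.2 K hb ht with h | ⟨W, h, -⟩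
    exacts [⟨_, h⟩, ⟨_, h⟩]
  refine ⟨⟨fun H hH => ⟨(bot_le.trans_lt hH.1).ne', hH.2.1⟩, ?_⟩, ?_⟩
  · intro K hb ht
    rw [domSet_aux_eq N D hD]
    suffices h : ∃ V ∈ D, K ⊓ V.comap (QuotientGroup.mk' N) ≠ ⊥ by
      obtain ⟨V, hV, h⟩ := h
      by_cases e : V.comap (QuotientGroup.mk' N) = K
      · exact Or.inl ⟨V, hV, e⟩
      · exact Or.inr ⟨_, ⟨V, hV, rfl⟩, e, h⟩
    by_cases hKN : K ⊓ N = ⊥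
    · have key : ∃ V ∈ D, K.map (QuotientGroup.mk' N) ⊓ V ≠ ⊥ := by
        by_cases h1 : K.map (QuotientGroup.mk' N) = ⊤
        · obtain ⟨V, hV⟩ := hne
          exact ⟨V, hV, by rw [h1, top_inf_eq]; exact (hD.1 V hV).1⟩
        · have h0 : K.map (QuotientGroup.mk' N) ≠ ⊥ := by
            intro h
            rw [Subgroup.map_eq_bot_iff, QuotientGroup.ker_mk'] at h
            exact hb (by rwa [inf_eq_left.2 h] at hKN)
          rcases hD.2 _ h0 h1 with h | ⟨V, hV, -, h⟩
          · exact ⟨_, h, by rwa [inf_idem]⟩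
          · exact ⟨V, hV, h⟩
      obtain ⟨V, hV, h⟩ := key
      refine ⟨V, hV, fun h' => h ?_⟩
      rw [Subgroup.eq_bot_iff_forall] at h' ⊢
      rintro _ ⟨⟨k, hk, rfl⟩, hkV⟩
      rw [h' k ⟨hk, hkV⟩, map_one]
    · obtain ⟨V, hV⟩ := hne
      refine ⟨V, hV, fun h => hKN ?_⟩
      rw [eq_bot_iff, ← h]
      refine inf_le_inf_left K ?_
      conv_lhs => rw [← QuotientGroup.ker_mk' N]
      exact Subgroup.ker_le_comap _ _
  · rw [domSet_aux_eq N D hD]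
    exact Set.ncard_image_of_injective _ (Subgroup.comap_injective hs)

/-- Let `N` be a normal subgroup of the finite group `G` such that `G/N` has a
proper non-trivial subgroup. If `D` is a dominating set of `Γ(G/N)`, then the
set `{W | N < W < G and W/N ∈ D}` is a dominating set of `Γ(G)` of the same
cardinality as `D`. In particular `γ(G) ≤ γ(G/N)`. -/
theorem domSet_of_quotient {G : Type*} [Group G] [Finite G]
    (N : Subgroup G) [N.Normal]
    (hQ : ∃ K : Subgroup (G ⧸ N), K ≠ ⊥ ∧ K ≠ ⊤)
    (D : Set (Subgroup (G ⧸ N))) (hD : IsDomSet D) :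
    (IsDomSet {W : Subgroup G | N < W ∧ W ≠ ⊤ ∧ W.map (QuotientGroup.mk' N) ∈ D} ∧
      {W : Subgroup G | N < W ∧ W ≠ ⊤ ∧ W.map (QuotientGroup.mk' N) ∈ D}.ncard =
        D.ncard) ∧
    domNumber G ≤ domNumber (G ⧸ N) := by
  refine ⟨domSet_aux N hQ D hD, ?_⟩
  obtain ⟨E, hE, hc⟩ := Nat.sInf_mem
    (s := {n : ℕ | ∃ D : Set (Subgroup (G ⧸ N)), IsDomSet D ∧ D.ncard = n}) ⟨_, D, hD, rfl⟩
  have h := domSet_aux N hQ E hE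
  exact Nat.sInf_le ⟨_, h.1, h.2.trans hc⟩
end

section
/- Let G ≅ H × K be a finite group which is the direct product of two groups H and K, where at least one of H and K has a proper non-trivial subgroup. Then γ(G) ≤ min{γ(H), γ(K)}, in the sense that if H (respectively K) has a dominating set of cardinality n for its intersection graph, then G has a dominating set of cardinality at most n for Γ(G). -/
theorem domSet_comap_aux {G H : Type*} [Group G] [Group H] [Finite H] (f : G →* H)
    (hf : Function.Surjective f) (D : Set (Subgroup H))
    (hA : ∃ A : Subgroup H, A ≠ ⊥ ∧ A ≠ ⊤) (hD : IsDomSet D) :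
    ∃ D' : Set (Subgroup G), IsDomSet D' ∧ D'.ncard ≤ D.ncard := by
  obtain ⟨h1, h2⟩ := hD
  refine ⟨(fun A => A.comap f) '' D, ⟨?_, ?_⟩, Set.ncard_image_le (Set.toFinite D)⟩
  · rintro _ ⟨A, hAD, rfl⟩
    obtain ⟨hb, ht⟩ := h1 A hAD
    have hm : (A.comap f).map f = A := Subgroup.map_comap_eq_self_of_surjective hf A
    refine ⟨fun h => hb ?_, fun h => ht ?_⟩
    · change A.comap f = _ at h
      rw [← hm, h, Subgroup.map_bot]
    · change A.comap f = _ at h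
      rw [← hm, h, Subgroup.map_top_of_surjective f hf]
  · intro L hLb hLt
    have key : ∃ W ∈ D, L ⊓ W.comap f ≠ ⊥ := by
      obtain ⟨A, hAb, hAt⟩ := hA
      have hne : ∃ W, W ∈ D := by
        rcases h2 A hAb hAt with h | ⟨W, hW, -⟩
        exacts [⟨A, h⟩, ⟨W, hW⟩]
      by_cases hPb : L.map f = ⊥
      · obtain ⟨W, hW⟩ := hne
        refine ⟨W, hW, ?_⟩
        have : L ≤ W.comap f := by
          rw [← Subgroup.map_le_iff_le_comap, hPb]
          exact bot_le
        rwa [inf_eq_left.mpr this]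
      · have : ∃ W ∈ D, L.map f ⊓ W ≠ ⊥ := by
          by_cases hPt : L.map f = ⊤
          · obtain ⟨W, hW⟩ := hne
            refine ⟨W, hW, ?_⟩
            rw [hPt, top_inf_eq]
            exact (h1 W hW).1
          · rcases h2 _ hPb hPt with h | ⟨W, hW, -, h⟩
            · exact ⟨_, h, by rwa [inf_idem]⟩
            · exact ⟨W, hW, h⟩
        obtain ⟨W, hW, h⟩ := this
        refine ⟨W, hW, fun hbot => h ?_⟩
        rw [eq_bot_iff]
        rintro _ ⟨⟨g, hg, rfl⟩, hgW⟩
        have hg' : g ∈ L ⊓ W.comap f := ⟨hg, hgW⟩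
        rw [hbot, Subgroup.mem_bot] at hg'
        simp [hg']
    obtain ⟨W, hW, h⟩ := key
    by_cases he : W.comap f = L
    · exact Or.inl ⟨W, hW, he⟩
    · exact Or.inr ⟨_, ⟨W, hW, rfl⟩, he, h⟩

/-- For a finite direct product `H × K`: if `H` (respectively `K`) has a proper
non-trivial subgroup and `D` is a dominating set of `Γ(H)` (resp. of `Γ(K)`) of
cardinality `n`, then `Γ(H × K)` has a dominating set of cardinality at most `n`.
Hence `γ(H × K) ≤ min {γ(H), γ(K)}`. -/
theorem domNumber_prod_le_min {H K : Type*} [Group H] [Group K] [Finite H] [Finite K]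
    (hHK : (∃ A : Subgroup H, A ≠ ⊥ ∧ A ≠ ⊤) ∨ (∃ B : Subgroup K, B ≠ ⊥ ∧ B ≠ ⊤)) :
    (∀ D : Set (Subgroup H), (∃ A : Subgroup H, A ≠ ⊥ ∧ A ≠ ⊤) → IsDomSet D →
      ∃ D' : Set (Subgroup (H × K)), IsDomSet D' ∧ D'.ncard ≤ D.ncard) ∧
    (∀ D : Set (Subgroup K), (∃ B : Subgroup K, B ≠ ⊥ ∧ B ≠ ⊤) → IsDomSet D →
      ∃ D' : Set (Subgroup (H × K)), IsDomSet D' ∧ D'.ncard ≤ D.ncard) := by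
  exact ⟨fun D => domSet_comap_aux (MonoidHom.fst H K) Prod.fst_surjective D,
    fun D => domSet_comap_aux (MonoidHom.snd H K) Prod.snd_surjective D⟩
end

section
/- Let G be a finite group, p a prime, and N a normal p-subgroup of G such that there exists a proper non-trivial p-subgroup of G strictly containing N. Let D be a set of proper non-trivial p-subgroups of G, each strictly containing N, with the property that for every proper non-trivial p-subgroup K of G strictly containing N, either K ∈ D or there exists W ∈ D with K ∩ W strictly containing N. Then D dominates the intersection graph of all proper non-trivial p-subgroups of G: every proper non-trivial p-subgroup H of G either belongs to D or satisfies H ∩ W ≠ 1 for some W ∈ D. -/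
/-- Let `N` be a normal `p`-subgroup of a finite group `G` such that some proper
non-trivial `p`-subgroup of `G` strictly contains `N`. If `D` is a set of proper
non-trivial `p`-subgroups of `G`, each strictly containing `N`, such that every
proper non-trivial `p`-subgroup `K` strictly containing `N` either belongs to `D`
or meets some `W ∈ D` in a subgroup strictly containing `N`, then every proper
non-trivial `p`-subgroup `H` of `G` either belongs to `D` or satisfies
`H ⊓ W ≠ ⊥` for some `W ∈ D`. -/
theorem pSubgroups_dominated {G : Type*} [Group G] [Finite G] {p : ℕ} (hp : p.Prime)
    (N : Subgroup G) [N.Normal] (hNp : IsPGroup p N)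
    (hex : ∃ K : Subgroup G, IsPGroup p K ∧ K ≠ ⊤ ∧ N < K)
    (D : Set (Subgroup G))
    (hDmem : ∀ W ∈ D, IsPGroup p W ∧ W ≠ ⊤ ∧ N < W)
    (hDdom : ∀ K : Subgroup G, IsPGroup p K → K ≠ ⊤ → N < K →
      K ∈ D ∨ ∃ W ∈ D, N < K ⊓ W) :
    ∀ H : Subgroup G, IsPGroup p H → H ≠ ⊥ → H ≠ ⊤ →
      H ∈ D ∨ ∃ W ∈ D, H ⊓ W ≠ ⊥ := by
  intro H hH hHb hHt
  have key : ∀ W ∈ D, N < (H ⊔ N) ⊓ W → H ⊓ W ≠ ⊥ := by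
    intro W hW hlt hbot
    obtain ⟨x, hx, hxN⟩ := SetLike.exists_of_lt hlt
    obtain ⟨hx1, hxW⟩ := Subgroup.mem_inf.mp hx
    obtain ⟨h, hh, n, hn, rfl⟩ := Subgroup.mem_sup_of_normal_right.mp hx1
    have hhW : h ∈ W := (Subgroup.mul_mem_cancel_right W ((hDmem W hW).2.2.le hn)).mp hxW
    have h1 : h ∈ H ⊓ W := ⟨hh, hhW⟩
    rw [hbot, Subgroup.mem_bot] at h1
    subst h1
    exact hxN (by simpa using hn)
  obtain ⟨K, hK, hKt, hNK⟩ := hex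
  obtain ⟨W, hW⟩ : ∃ W, W ∈ D := by
    rcases hDdom K hK hKt hNK with h | ⟨W, hW, _⟩
    · exact ⟨K, h⟩
    · exact ⟨W, hW⟩
  right
  by_cases hHN : H ≤ N
  · refine ⟨W, hW, ?_⟩
    rwa [inf_eq_left.mpr (hHN.trans (hDmem W hW).2.2.le)]
  · have hlt : N < H ⊔ N := right_lt_sup.mpr hHN
    by_cases htop : H ⊔ N = ⊤
    · exact ⟨W, hW, key W hW (by rw [htop, top_inf_eq]; exact (hDmem W hW).2.2)⟩
    · rcases hDdom _ (hH.to_sup_of_normal_right hNp) htop hlt with h | ⟨W', hW', h⟩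
      · exact ⟨_, h, key _ h (by rwa [inf_idem])⟩
      · exact ⟨W', hW', key W' hW' h⟩
end

section
/- Let G be a finite abelian group having at least one proper non-trivial subgroup. Then γ(G) = 1 if and only if sfp(G) < exp(G), where sfp(G) is the product of the distinct primes dividing |G| and exp(G) is the exponent of G. -/
lemma mem_of_squarefree {G : Type*} [CommGroup G] (H : Subgroup G)
    (hH : ∀ x : G, (orderOf x).Prime → x ∈ H) :
    ∀ n : ℕ, Squarefree n → ∀ x : G, x ^ n = 1 → x ∈ H := by
  intro n
  induction n using Nat.strong_induction_on with
  | _ n ih =>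
    intro hs x hx
    by_cases h1 : n = 1
    · subst h1
      have : x = 1 := by simpa using hx
      rw [this]; exact H.one_mem
    obtain ⟨p, hp, m, rfl⟩ := Nat.exists_prime_and_dvd h1
    have hsq := (Nat.squarefree_mul_iff).1 hs
    have hm0 : 0 < m := Nat.pos_of_ne_zero (fun h => by simp [h] at hs)
    have hA : x ^ p ∈ H := by
      apply ih m _ hsq.2.2
      · rw [← pow_mul]; exact hx
      · nlinarith [hp.two_le]
    have hB : x ^ m ∈ H := by
      by_cases h : x ^ m = 1
      · rw [h]; exact H.one_mem
      · apply hH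
        haveI := Fact.mk hp
        have : orderOf (x ^ m) = p := orderOf_eq_prime (by rw [← pow_mul, mul_comm]; exact hx) h
        rw [this]; exact hp
    obtain ⟨a, b, hab⟩ := Nat.isCoprime_iff_coprime.2 hsq.1
    have : x = (x ^ p) ^ a * (x ^ m) ^ b := by
      rw [← zpow_natCast, ← zpow_natCast, ← zpow_mul, ← zpow_mul, ← zpow_add,
        mul_comm (p : ℤ), mul_comm (m : ℤ), hab, zpow_one]
    rw [this]
    exact H.mul_mem (H.zpow_mem hA a) (H.zpow_mem hB b)

lemma domNumber_eq_one {G : Type*} [CommGroup G] [Finite G]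
    (hG : ∃ K : Subgroup G, K ≠ ⊥ ∧ K ≠ ⊤) :
    domNumber G = 1 ↔ ∃ H : Subgroup G, H ≠ ⊥ ∧ H ≠ ⊤ ∧
      ∀ K : Subgroup G, K ≠ ⊥ → K ≠ ⊤ → K ⊓ H ≠ ⊥ := by
  constructor
  · intro h
    have hne : {n : ℕ | ∃ D : Set (Subgroup G), IsDomSet D ∧ D.ncard = n}.Nonempty := by
      by_contra hc
      rw [Set.not_nonempty_iff_eq_empty] at hc
      rw [domNumber, hc] at h
      simp at h
    have := Nat.sInf_mem hne
    change ∃ D : Set (Subgroup G), IsDomSet D ∧ D.ncard = domNumber G at this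
    obtain ⟨D, hD, hc⟩ := this
    rw [h, Set.ncard_eq_one] at hc
    obtain ⟨H, rfl⟩ := hc
    obtain ⟨h1, h2⟩ := hD.1 H rfl
    refine ⟨H, h1, h2, fun K hK hK' => ?_⟩
    rcases hD.2 K hK hK' with hk | ⟨W, hW, _, hk⟩
    · rw [Set.mem_singleton_iff.1 hk, inf_idem]; exact h1
    · rw [Set.mem_singleton_iff.1 hW] at hk; exact hk
  · rintro ⟨H, h1, h2, hH⟩
    have hmem : 1 ∈ {n : ℕ | ∃ D : Set (Subgroup G), IsDomSet D ∧ D.ncard = n} := by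
      refine ⟨{H}, ⟨?_, ?_⟩, Set.ncard_singleton H⟩
      · rintro K rfl; exact ⟨h1, h2⟩
      · intro K hK hK'
        by_cases hKH : K = H
        · left; exact hKH
        · right; exact ⟨H, rfl, fun h => hKH h.symm, hH K hK hK'⟩
    apply le_antisymm (Nat.sInf_le hmem)
    have := Nat.sInf_mem ⟨1, hmem⟩
    change ∃ D : Set (Subgroup G), IsDomSet D ∧ D.ncard = domNumber G at this
    obtain ⟨D, hD, hc⟩ := this
    change 1 ≤ domNumber G
    rw [← hc, Nat.one_le_iff_ne_zero, Ne, Set.ncard_eq_zero]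
    rintro rfl
    obtain ⟨K, hK, hK'⟩ := hG
    rcases hD.2 K hK hK' with hk | ⟨W, hW, _⟩
    · exact hk
    · exact hW

lemma exists_prime_order_mem {G : Type*} [CommGroup G] [Finite G] (K : Subgroup G)
    (hK : K ≠ ⊥) : ∃ x ∈ K, (orderOf x).Prime := by
  have : Nat.card K ≠ 1 := fun h => hK (Subgroup.card_eq_one.1 h)
  obtain ⟨p, hp, hd⟩ := Nat.exists_prime_and_dvd this
  haveI := Fact.mk hp
  obtain ⟨x, hx⟩ := exists_prime_orderOf_dvd_card' p hd
  refine ⟨x, x.2, ?_⟩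
  rw [Subgroup.orderOf_coe, hx]; exact hp

/-- A finite abelian group `G` with a proper non-trivial subgroup satisfies
`γ(G) = 1` iff the square-free part of `|G|` is strictly less than the exponent
of `G`. -/
theorem abelian_domNumber_eq_one_iff {G : Type*} [CommGroup G] [Finite G]
    (hG : ∃ K : Subgroup G, K ≠ ⊥ ∧ K ≠ ⊤) :
    domNumber G = 1 ↔ (∏ p ∈ (Nat.card G).primeFactors, p) < Monoid.exponent G := by
  rw [domNumber_eq_one hG]
  have hdvd : (∏ p ∈ (Nat.card G).primeFactors, p) ∣ Monoid.exponent G := by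
    apply Finset.prod_primes_dvd
    · intro p hp; exact (Nat.prime_of_mem_primeFactors hp).prime
    · intro p hp
      haveI := Fact.mk (Nat.prime_of_mem_primeFactors hp)
      obtain ⟨x, hx⟩ := exists_prime_orderOf_dvd_card' p (Nat.dvd_of_mem_primeFactors hp)
      rw [← hx]; exact Monoid.order_dvd_exponent x
  have hpos : 0 < Monoid.exponent G :=
    Nat.pos_of_ne_zero Monoid.exponent_ne_zero_of_finite
  have hsqf : Squarefree (∏ p ∈ (Nat.card G).primeFactors, p) := by
    rw [← Nat.radical_eq_prod_primeFactors]
    exact UniqueFactorizationMonoid.squarefree_radical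
  have hprime : ∀ x : G, (orderOf x).Prime →
      orderOf x ∣ ∏ p ∈ (Nat.card G).primeFactors, p := fun x hx =>
    Finset.dvd_prod_of_mem (fun p => p)
      (Nat.mem_primeFactors.2 ⟨hx, orderOf_dvd_natCard x, Nat.card_pos.ne'⟩)
  generalize (∏ p ∈ (Nat.card G).primeFactors, p) = s at *
  constructor
  · rintro ⟨H, h1, h2, hH⟩
    by_contra hlt
    have heq : s = Monoid.exponent G := le_antisymm (Nat.le_of_dvd hpos hdvd) (not_lt.1 hlt)
    apply h2
    rw [Subgroup.eq_top_iff']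
    intro x
    refine mem_of_squarefree H ?_ s hsqf x (by rw [heq]; exact Monoid.pow_exponent_eq_one x)
    intro y hy
    have key : ∀ L : Subgroup G, L ≤ Subgroup.zpowers y → L ≠ ⊥ → L = Subgroup.zpowers y := by
      intro L hL hL'
      apply Subgroup.eq_of_le_of_card_ge hL
      have hd := Subgroup.card_dvd_of_le hL
      rw [Nat.card_zpowers] at hd ⊢
      rcases (Nat.dvd_prime hy).1 hd with h | h
      · exact absurd (Subgroup.card_eq_one.1 h) hL'
      · exact h.ge
    have hyne : Subgroup.zpowers y ≠ ⊥ := by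
      rw [Ne, Subgroup.zpowers_eq_bot]
      rintro rfl
      simp [Nat.not_prime_one] at hy
    have hytop : Subgroup.zpowers y ≠ ⊤ := by
      intro ht
      obtain ⟨K, hK, hK'⟩ := hG
      exact hK' ((key K (ht ▸ le_top) hK).trans ht)
    have := key _ inf_le_left (hH _ hyne hytop)
    exact (inf_eq_left.1 this) (Subgroup.mem_zpowers y)
  · intro hlt
    have hmem : ∀ K : Subgroup G, K ≠ ⊥ → K ⊓ (powMonoidHom s : G →* G).ker ≠ ⊥ := by
      intro K hK hb
      obtain ⟨x, hx, hp⟩ := exists_prime_order_mem K hK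
      have : x ∈ K ⊓ (powMonoidHom s : G →* G).ker :=
        ⟨hx, by
          change x ^ s = 1
          exact orderOf_dvd_iff_pow_eq_one.1 (hprime x hp)⟩
      rw [hb, Subgroup.mem_bot] at this
      subst this
      simp [Nat.not_prime_one] at hp
    refine ⟨(powMonoidHom s : G →* G).ker, ?_, ?_, fun K hK _ => hmem K hK⟩
    · obtain ⟨K, hK, _⟩ := hG
      intro h
      apply hmem K hK
      rw [h, inf_bot_eq]
    · intro h
      have : Monoid.exponent G ∣ s := by
        apply Monoid.exponent_dvd_of_forall_pow_eq_one
        intro x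
        have : x ∈ (powMonoidHom s : G →* G).ker := h ▸ Subgroup.mem_top x
        simpa [MonoidHom.mem_ker] using this
      exact absurd (Nat.le_of_dvd (Nat.pos_of_ne_zero hsqf.ne_zero) this) (not_le.2 hlt)
end

section
/- Let G be a finite abelian group having at least one proper non-trivial subgroup. Then γ(G) = 2 if and only if sfp(G) = exp(G) and sfp(G) is not a prime number. -/
theorem aux_dom_iff {G : Type*} [CommGroup G] [Finite G]
    (hG : ∃ K : Subgroup G, K ≠ ⊥ ∧ K ≠ ⊤) (D : Set (Subgroup G)) :
    IsDomSet D ↔ (∀ H ∈ D, H ≠ ⊥ ∧ H ≠ ⊤) ∧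
      ∀ x : G, (orderOf x).Prime → ∃ W ∈ D, x ∈ W := by
  refine and_congr_right fun hD => ⟨fun h x hx => ?_, fun h K hK hK' => ?_⟩
  · have hcard : (Nat.card (Subgroup.zpowers x)).Prime := by rwa [Nat.card_zpowers]
    have h1 : Subgroup.zpowers x ≠ ⊥ := by
      intro h0
      rw [Subgroup.zpowers_eq_bot] at h0
      rw [h0, orderOf_one] at hx
      exact Nat.not_prime_one hx
    have h2 : Subgroup.zpowers x ≠ ⊤ := by
      intro h0
      obtain ⟨K, hK, hK'⟩ := hG
      rw [h0, Subgroup.card_top] at hcard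
      have := Fact.mk hcard
      rcases Subgroup.eq_bot_or_eq_top_of_prime_card K with h | h
      · exact hK h
      · exact hK' h
    rcases h _ h1 h2 with h | ⟨W, hW, -, hne⟩
    · exact ⟨_, h, Subgroup.mem_zpowers x⟩
    · refine ⟨W, hW, ?_⟩
      have := Fact.mk hcard
      rcases Subgroup.eq_bot_or_eq_top_of_prime_card (W.subgroupOf (Subgroup.zpowers x)) with h | h
      · rw [Subgroup.subgroupOf_eq_bot, disjoint_iff, inf_comm] at h
        exact absurd h hne
      · rw [Subgroup.subgroupOf_eq_top] at h
        exact h (Subgroup.mem_zpowers x)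
  · have hc : Nat.card K ≠ 1 := by
      intro h0
      exact hK (Subgroup.card_eq_one.mp h0)
    obtain ⟨p, hp, hpd⟩ := Nat.exists_prime_and_dvd hc
    have := Fact.mk hp
    obtain ⟨x, hx⟩ := exists_prime_orderOf_dvd_card' p hpd
    have hx' : orderOf (x : G) = p := by rw [Subgroup.orderOf_coe, hx]
    obtain ⟨W, hW, hxW⟩ := h (x : G) (hx' ▸ hp)
    by_cases hWK : W = K
    · exact Or.inl (hWK ▸ hW)
    · refine Or.inr ⟨W, hW, hWK, fun h0 => ?_⟩
      have : (x : G) ∈ K ⊓ W := ⟨x.2, hxW⟩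
      rw [h0, Subgroup.mem_bot] at this
      rw [this, orderOf_one] at hx'
      exact hp.one_lt.ne hx'

theorem aux_sqfree {G : Type*} [CommGroup G] (W : Subgroup G)
    (hW : ∀ x : G, (orderOf x).Prime → x ∈ W) (m : ℕ) :
    Squarefree m → ∀ g : G, g ^ m = 1 → g ∈ W := by
  induction m using Nat.strong_induction_on with
  | _ m ih =>
    intro hm g hg
    by_cases h1 : m = 1
    · subst h1
      rw [pow_one] at hg
      exact hg ▸ W.one_mem
    obtain ⟨p, hp, k, rfl⟩ := Nat.exists_prime_and_dvd h1
    have hk0 : 0 < k := by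
      rcases Nat.eq_zero_or_pos k with rfl | h
      · exact absurd hm (by simp)
      · exact h
    have hco : Nat.Coprime p k := Nat.coprime_of_squarefree_mul hm
    have h1 : g ^ p ∈ W := ih k (by nlinarith [hp.two_le]) (hm.of_mul_right) _ (by rw [← pow_mul, hg])
    have h2 : g ^ k ∈ W := by
      have h3 : orderOf (g ^ k) ∣ p := orderOf_dvd_of_pow_eq_one (by rw [← pow_mul, mul_comm, hg])
      rcases (Nat.dvd_prime hp).mp h3 with h | h
      · rw [orderOf_eq_one_iff] at h
        rw [h]; exact W.one_mem
      · exact hW _ (h ▸ hp)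
    have hb := Nat.gcd_eq_gcd_ab p k
    rw [hco.gcd_eq_one] at hb
    have : g = (g ^ p) ^ (p.gcdA k) * (g ^ k) ^ (p.gcdB k) := by
      rw [← zpow_natCast g p, ← zpow_natCast g k, ← zpow_mul, ← zpow_mul, ← zpow_add, ← hb]
      simp
    rw [this]
    exact W.mul_mem (W.zpow_mem h1 _) (W.zpow_mem h2 _)

theorem abelian_domNumber_eq_two_iff {G : Type*} [CommGroup G] [Finite G]
    (hG : ∃ K : Subgroup G, K ≠ ⊥ ∧ K ≠ ⊤) :
    domNumber G = 2 ↔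
      ((∏ p ∈ (Nat.card G).primeFactors, p) = Monoid.exponent G ∧
        ¬(∏ p ∈ (Nat.card G).primeFactors, p).Prime) := by
  have hdom := aux_dom_iff hG
  have hcard0 : Nat.card G ≠ 0 := Nat.card_pos.ne'
  have hnt : Nontrivial G := by
    obtain ⟨K, hK, -⟩ := hG
    obtain ⟨x, hx⟩ := Subgroup.ne_bot_iff_exists_ne_one.mp hK
    exact ⟨x.1, 1, fun h => hx (Subtype.ext h)⟩
  have hcard1 : Nat.card G ≠ 1 := (Finite.one_lt_card).ne'
  set n := ∏ p ∈ (Nat.card G).primeFactors, p with hn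
  have hdvd : ∀ p : ℕ, p.Prime → p ∣ Nat.card G → p ∣ n := fun p hp h =>
    Finset.dvd_prod_of_mem _ (Nat.mem_primeFactors.mpr ⟨hp, h, hcard0⟩)
  have hnc : n ∣ Nat.card G := Nat.prod_primeFactors_dvd _
  have hsq : Squarefree n := by
    rw [hn]
    exact Finset.squarefree_prod_of_pairwise_isCoprime
      (fun p hp q hq hpq => Nat.coprime_iff_isRelPrime.mp ((Nat.coprime_primes
        (Nat.prime_of_mem_primeFactors hp) (Nat.prime_of_mem_primeFactors hq)).mpr hpq))
      (fun p hp => (Nat.prime_of_mem_primeFactors hp).squarefree)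
  have hpow : ∀ x : G, (orderOf x).Prime → x ^ n = 1 := fun x hx =>
    orderOf_dvd_iff_pow_eq_one.mp (hdvd _ hx (orderOf_dvd_natCard x))
  have hcau : ∀ p : ℕ, p.Prime → p ∣ Nat.card G → ∃ x : G, orderOf x = p := fun p hp h => by
    have := Fact.mk hp
    exact exists_prime_orderOf_dvd_card' p h
  have hne : n ∣ Monoid.exponent G := by
    refine Finset.prod_primes_dvd _ (fun p hp => (Nat.prime_of_mem_primeFactors hp).prime) ?_
    intro p hp
    obtain ⟨x, hx⟩ := hcau p (Nat.prime_of_mem_primeFactors hp) (Nat.dvd_of_mem_primeFactors hp)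
    exact hx ▸ Monoid.order_dvd_exponent x
  have hkbot : ∀ m p : ℕ, p.Prime → p ∣ Nat.card G → p ∣ m →
      (powMonoidHom m : G →* G).ker ≠ ⊥ := by
    intro m p hp h hm h0
    obtain ⟨x, hx⟩ := hcau p hp h
    have : x ∈ (powMonoidHom m : G →* G).ker := by
      rw [MonoidHom.mem_ker, powMonoidHom_apply]
      exact orderOf_dvd_iff_pow_eq_one.mp (hx ▸ hm)
    rw [h0, Subgroup.mem_bot] at this
    rw [this, orderOf_one] at hx
    exact hp.one_lt.ne hx
  have hktop : ∀ m : ℕ, (powMonoidHom m : G →* G).ker = ⊤ → Monoid.exponent G ∣ m := by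
    intro m h
    refine Monoid.exponent_dvd_of_forall_pow_eq_one fun g => ?_
    have : g ∈ (powMonoidHom m : G →* G).ker := h ▸ Subgroup.mem_top g
    simpa [MonoidHom.mem_ker] using this
  obtain ⟨p₀, hp₀, hp₀d⟩ := Nat.exists_prime_and_dvd hcard1
  have hallD : IsDomSet {K : Subgroup G | K ≠ ⊥ ∧ K ≠ ⊤} :=
    ⟨fun H hH => hH, fun K h1 h2 => Or.inl ⟨h1, h2⟩⟩
  obtain ⟨D, hD, hDn⟩ : domNumber G ∈ {n : ℕ | ∃ D : Set (Subgroup G), IsDomSet D ∧ D.ncard = n} :=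
    Nat.sInf_mem ⟨_, _, hallD, rfl⟩
  have hle : ∀ D : Set (Subgroup G), IsDomSet D → domNumber G ≤ D.ncard := fun D hD =>
    Nat.sInf_le ⟨D, hD, rfl⟩
  rw [hdom] at hD
  constructor
  · intro h2
    have hE : n = Monoid.exponent G := by
      by_contra hcon
      have : IsDomSet {(powMonoidHom n : G →* G).ker} := by
        rw [hdom]
        refine ⟨?_, fun x hx => ⟨_, rfl, ?_⟩⟩
        · rintro H rfl
          exact ⟨hkbot n p₀ hp₀ hp₀d (hdvd _ hp₀ hp₀d),
            fun h => hcon (Nat.dvd_antisymm hne (hktop n h))⟩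
        · simpa [MonoidHom.mem_ker] using hpow x hx
      have := hle _ this
      rw [Set.ncard_singleton] at this
      omega
    refine ⟨hE, fun hp => ?_⟩
    rw [h2, Set.ncard_eq_two] at hDn
    obtain ⟨A, B, -, rfl⟩ := hDn
    have hAB : ∀ x : G, x ∈ A ∨ x ∈ B := by
      intro x
      rcases (Nat.dvd_prime hp).mp (hE ▸ Monoid.order_dvd_exponent x) with h | h
      · rw [orderOf_eq_one_iff] at h
        exact Or.inl (h ▸ A.one_mem)
      · obtain ⟨W, hW, hx⟩ := hD.2 x (h ▸ hp)
        rcases hW with rfl | rfl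
        · exact Or.inl hx
        · exact Or.inr hx
    have hA := (hD.1 A (by simp)).2
    have hB := (hD.1 B (by simp)).2
    rw [Ne, Subgroup.eq_top_iff'] at hA hB
    push Not at hA hB
    obtain ⟨a, ha⟩ := hA
    obtain ⟨b, hb⟩ := hB
    have haB := (hAB a).resolve_left ha
    have hbA := (hAB b).resolve_right hb
    rcases hAB (a * b) with h | h
    · exact ha ((Subgroup.mul_mem_cancel_right A hbA).mp h)
    · exact hb ((Subgroup.mul_mem_cancel_left B haB).mp h)
  · rintro ⟨hE, hp⟩
    have hge : 2 ≤ D.ncard := by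
      by_contra hlt
      have h1 : D.ncard ≤ 1 := by omega
      rw [Set.ncard_le_one_iff_subsingleton] at h1
      obtain ⟨x₀, hx₀⟩ := hcau p₀ hp₀ hp₀d
      obtain ⟨W, hW, -⟩ := hD.2 x₀ (hx₀ ▸ hp₀)
      refine (hD.1 W hW).2 ((Subgroup.eq_top_iff' W).mpr fun g => ?_)
      refine aux_sqfree W (fun x hx => ?_) n hsq g (hE ▸ Monoid.pow_exponent_eq_one g)
      obtain ⟨V, hV, hxV⟩ := hD.2 x hx
      exact h1 hV hW ▸ hxV
    refine le_antisymm ?_ (hDn ▸ hge)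
    obtain ⟨m, hm⟩ := hdvd p₀ hp₀ hp₀d
    have hm1 : m ≠ 1 := by
      rintro rfl
      rw [hm, mul_one] at hp
      exact hp hp₀
    have hn0 : 0 < n := Nat.pos_of_dvd_of_pos hnc (Nat.pos_of_ne_zero hcard0)
    have hm0 : 0 < m := by
      rcases Nat.eq_zero_or_pos m with h | h
      · rw [hm, h] at hn0; simp at hn0
      · exact h
    obtain ⟨q, hq, hqm⟩ := Nat.exists_prime_and_dvd hm1
    have hmn : m ∣ n := ⟨p₀, by rw [hm, mul_comm]⟩
    have : IsDomSet {(powMonoidHom p₀ : G →* G).ker, (powMonoidHom m : G →* G).ker} := by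
      rw [hdom]
      refine ⟨?_, fun x hx => ?_⟩
      · rintro H (rfl | rfl)
        · refine ⟨hkbot _ p₀ hp₀ hp₀d dvd_rfl, fun h => ?_⟩
          have := Nat.le_of_dvd hp₀.pos (hktop _ h)
          rw [← hE, hm] at this
          have : 2 ≤ m := by omega
          nlinarith [hp₀.pos]
        · refine ⟨hkbot _ q hq ((hqm.trans hmn).trans hnc) hqm, fun h => ?_⟩
          have := Nat.le_of_dvd hm0 (hktop _ h)
          rw [← hE, hm] at this
          nlinarith [hp₀.two_le]
      · have h3 := hdvd _ hx (orderOf_dvd_natCard x)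
        rw [hm] at h3
        rcases hx.dvd_mul.mp h3 with h | h
        · exact ⟨_, Or.inl rfl, by simpa [MonoidHom.mem_ker] using orderOf_dvd_iff_pow_eq_one.mp h⟩
        · exact ⟨_, Or.inr rfl, by simpa [MonoidHom.mem_ker] using orderOf_dvd_iff_pow_eq_one.mp h⟩
    refine (hle _ this).trans ((Set.ncard_insert_le _ _).trans ?_)
    rw [Set.ncard_singleton]
end

section
/- Let G be a finite abelian group having at least one proper non-trivial subgroup, and let p be a prime number. Then γ(G) = p + 1 if and only if sfp(G) = exp(G) = p (equivalently, G is an elementary abelian p-group of rank at least 2). -/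
theorem aux_isDomSet {G : Type*} [CommGroup G] [Finite G] (D : Set (Subgroup G))
    (h1 : ∀ H ∈ D, H ≠ ⊥ ∧ H ≠ ⊤)
    (h2 : ∀ x : G, (orderOf x).Prime → ∃ W ∈ D, x ∈ W) : IsDomSet D := by
  refine ⟨h1, fun K hK _ => ?_⟩
  have hc : Nat.card K ≠ 1 := fun h => hK (Subgroup.card_eq_one.mp h)
  obtain ⟨r, hr, hrd⟩ := Nat.exists_prime_and_dvd hc
  haveI := Fact.mk hr
  obtain ⟨x, hx⟩ := exists_prime_orderOf_dvd_card' (G := K) r hrd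
  have hx' : orderOf (x : G) = r := by rw [Subgroup.orderOf_coe, hx]
  obtain ⟨W, hW, hxW⟩ := h2 x (by rw [hx']; exact hr)
  by_cases hWK : W = K
  · left; rw [← hWK]; exact hW
  · refine Or.inr ⟨W, hW, hWK, fun hb => ?_⟩
    have : (x : G) ∈ K ⊓ W := ⟨x.2, hxW⟩
    rw [hb, Subgroup.mem_bot] at this
    rw [this, orderOf_one] at hx'
    exact hr.one_lt.ne hx'

theorem aux_small {G : Type*} [CommGroup G] [Finite G] (q : ℕ) (hq : q.Prime)
    (hd : q ∣ Nat.card G) (hne : ¬ ∀ g : G, g ^ q = 1) : domNumber G ≤ 2 := by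
  haveI := Fact.mk hq
  obtain ⟨y, hy⟩ := exists_prime_orderOf_dvd_card' (G := G) q hd
  have hy1 : y ≠ 1 := by
    rintro rfl
    rw [orderOf_one] at hy
    exact hq.one_lt.ne hy
  have hyq : y ^ q = 1 := by rw [← hy]; exact pow_orderOf_eq_one y
  push Not at hne
  obtain ⟨z, hz⟩ := hne
  set f : G →* G := powMonoidHom q with hf
  have hfa : ∀ x, f x = x ^ q := fun x => rfl
  have hD : IsDomSet ({f.ker, f.range} : Set (Subgroup G)) := by
    apply aux_isDomSet
    · intro H hH
      rcases hH with rfl | hH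
      · constructor
        · intro hb
          have : y ∈ f.ker := by rw [MonoidHom.mem_ker, hfa, hyq]
          rw [hb, Subgroup.mem_bot] at this
          exact hy1 this
        · intro hb
          have : z ∈ f.ker := by rw [hb]; trivial
          rw [MonoidHom.mem_ker, hfa] at this
          exact hz this
      · rw [Set.mem_singleton_iff] at hH
        subst hH
        constructor
        · intro hb
          have : f z ∈ f.range := ⟨z, rfl⟩
          rw [hb, Subgroup.mem_bot] at this
          exact hz this
        · intro hb
          have hs := MonoidHom.range_eq_top.mp hb
          have hi := Finite.injective_iff_surjective.mpr hs
          exact hy1 (hi (by rw [hfa, hyq, map_one]))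
    · intro x hx
      by_cases hxq : orderOf x = q
      · exact ⟨f.ker, by simp, by rw [MonoidHom.mem_ker, hfa, ← hxq]; exact pow_orderOf_eq_one x⟩
      · refine ⟨f.range, by simp, ?_⟩
        have hco : (orderOf x).Coprime q := (Nat.coprime_primes hx hq).mpr hxq
        obtain ⟨m, hm⟩ := exists_pow_eq_self_of_coprime hco.symm
        exact ⟨x ^ m, by rw [hfa, ← pow_mul, mul_comm, pow_mul, hm]⟩
  calc domNumber G ≤ _ := Nat.sInf_le ⟨_, hD, rfl⟩
    _ ≤ 2 := (Set.ncard_insert_le _ _).trans (by rw [Set.ncard_singleton])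

theorem aux_lower {G : Type*} [CommGroup G] [Finite G]
    (hG : ∃ K : Subgroup G, K ≠ ⊥ ∧ K ≠ ⊤) {p : ℕ} (hp : p.Prime)
    (hexp : ∀ g : G, g ^ p = 1) (D : Set (Subgroup G)) (hD : IsDomSet D) :
    p + 1 ≤ D.ncard := by
  haveI := Fact.mk hp
  classical
  have hnp : ¬ (Nat.card G).Prime := by
    intro h
    haveI := Fact.mk h
    obtain ⟨K, h1, h2⟩ := hG
    rcases K.eq_bot_or_eq_top_of_prime_card with h | h
    · exact h1 h
    · exact h2 h
  have ho : ∀ g : G, g ≠ 1 → orderOf g = p := fun g hg => orderOf_eq_prime (hexp g) hg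
  have hcov : ∀ g : G, g ≠ 1 → ∃ W ∈ D, g ∈ W := by
    intro g hg
    have hcz : Nat.card (Subgroup.zpowers g) = p := by rw [Nat.card_zpowers, ho g hg]
    rcases hD.2 (Subgroup.zpowers g) (by simpa using hg) (by
      intro h
      rw [h, Subgroup.card_top] at hcz
      exact hnp (hcz ▸ hp)) with h | ⟨W, hW, _, hne⟩
    · exact ⟨_, h, Subgroup.mem_zpowers g⟩
    · refine ⟨W, hW, ?_⟩
      obtain ⟨y, hy, hy1⟩ := (Subgroup.ne_bot_iff_exists_ne_one).mp hne |>.elim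
        (fun a ha => (⟨a.1, a.2, fun h => ha (Subtype.ext h)⟩ :
          ∃ y : G, y ∈ Subgroup.zpowers g ⊓ W ∧ y ≠ 1))
      have hle : Subgroup.zpowers y ≤ Subgroup.zpowers g := by
        rw [Subgroup.zpowers_le]; exact hy.1
      have heq : Subgroup.zpowers y = Subgroup.zpowers g :=
        Subgroup.eq_of_le_of_card_ge hle (by
          rw [Nat.card_zpowers, Nat.card_zpowers, ho g hg, ho y hy1])
      have : g ∈ Subgroup.zpowers y := heq ▸ Subgroup.mem_zpowers g
      exact (Subgroup.zpowers_le.mpr hy.2) this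
  by_contra hlt
  push Not at hlt
  have hfin : D.Finite := Set.toFinite D
  haveI := Fintype.ofFinite G
  set F := hfin.toFinset with hF
  have hFc : F.card ≤ p := by
    rw [Set.ncard_eq_toFinset_card D hfin, ← hF] at hlt
    omega
  have hsub : (Finset.univ.erase (1 : G)) ⊆
      F.biUnion (fun W => (Finset.univ.filter (fun g => g ∈ W)).erase 1) := by
    intro g hg
    have hg1 : g ≠ 1 := by simpa using hg
    obtain ⟨W, hW, hgW⟩ := hcov g hg1
    simp only [Finset.mem_biUnion]
    exact ⟨W, by simpa [hF] using hW, by simp [hg1, hgW]⟩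
  have hpd : IsPGroup p G := fun g => ⟨1, by simpa using hexp g⟩
  have hW : ∀ W ∈ F, ((Finset.univ.filter (fun g => g ∈ W)).erase (1:G)).card
      ≤ Nat.card G / p - 1 := by
    intro W hW
    have hWD : W ∈ D := by simpa [hF] using hW
    rw [Finset.card_erase_of_mem (by simp [one_mem])]
    have h1 : (Finset.univ.filter (fun g => g ∈ W)).card = Nat.card W := by
      rw [Nat.card_eq_fintype_card, Fintype.card_subtype]
    rw [h1]
    have h2 : Nat.card W * W.index = Nat.card G := W.card_mul_index
    have h3 : p ≤ W.index := by
      obtain ⟨n, hn⟩ := hpd.index W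
      have : n ≠ 0 := by
        rintro rfl
        exact (hD.1 W hWD).2 (Subgroup.index_eq_one.mp (by simpa using hn))
      rw [hn]
      exact Nat.le_self_pow this p
    have h4 : Nat.card W ≤ Nat.card G / p := by
      rw [Nat.le_div_iff_mul_le hp.pos, ← h2]
      exact Nat.mul_le_mul_left _ h3
    omega
  have hc := (Finset.card_le_card hsub).trans (Finset.card_biUnion_le_card_mul F _ _ hW)
  rw [Finset.card_erase_of_mem (Finset.mem_univ _), Finset.card_univ,
    ← Nat.card_eq_fintype_card] at hc
  have hc2 : Nat.card G - 1 ≤ p * (Nat.card G / p - 1) := hc.trans (Nat.mul_le_mul_right _ hFc)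
  have h5 : p * (Nat.card G / p) ≤ Nat.card G := Nat.mul_div_le _ _
  rw [Nat.mul_sub, mul_one] at hc2
  have h6 : 1 < Nat.card G := by
    obtain ⟨K, hK, hK'⟩ := hG
    by_contra h
    have h7 : Nat.card G = 1 := by
      have := Nat.card_pos (α := G)
      omega
    haveI := (Nat.card_eq_one_iff_unique.mp h7).1
    exact hK (Subsingleton.elim _ _)
  have := hp.two_le
  omega

theorem aux_upper {G : Type*} [CommGroup G] [Finite G]
    (hG : ∃ K : Subgroup G, K ≠ ⊥ ∧ K ≠ ⊤) {p : ℕ} (hp : p.Prime)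
    (hexp : ∀ g : G, g ^ p = 1) : ∃ D : Set (Subgroup G), IsDomSet D ∧ D.ncard ≤ p + 1 := by
  haveI := Fact.mk hp
  letI : Module (ZMod p) (Additive G) := AddCommGroup.zmodModule (n := p) (fun x => hexp x)
  haveI : Module.Finite (ZMod p) (Additive G) := Module.Finite.of_finite
  have hfr : 2 ≤ Module.finrank (ZMod p) (Additive G) := by
    by_contra h
    have hc := Module.natCard_eq_pow_finrank (K := ZMod p) (V := Additive G)
    rw [Nat.card_zmod] at hc
    have hc' : Nat.card G = p ^ Module.finrank (ZMod p) (Additive G) := hc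
    obtain ⟨K, h1, h2⟩ := hG
    have : Module.finrank (ZMod p) (Additive G) = 0 ∨
      Module.finrank (ZMod p) (Additive G) = 1 := by omega
    rcases this with h0 | h0
    · rw [h0, pow_zero] at hc'
      haveI := (Nat.card_eq_one_iff_unique.mp hc').1
      exact h1 (Subsingleton.elim _ _)
    · rw [h0, pow_one] at hc'
      haveI : Fact (Nat.card G).Prime := ⟨hc' ▸ hp⟩
      rcases K.eq_bot_or_eq_top_of_prime_card with h | h
      · exact h1 h
      · exact h2 h
  let b := Module.finBasis (ZMod p) (Additive G)
  let i : Fin (Module.finrank (ZMod p) (Additive G)) := ⟨0, by omega⟩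
  let j : Fin (Module.finrank (ZMod p) (Additive G)) := ⟨1, by omega⟩
  have hij : i ≠ j := by simp [i, j]
  have fi : b.coord i (b i) = 1 := by simp
  have fj : b.coord i (b j) = 0 := by simp [Finsupp.single_apply, hij.symm]
  have gi : b.coord j (b i) = 0 := by simp [Finsupp.single_apply, hij]
  have gj : b.coord j (b j) = 1 := by simp
  generalize b.coord i = f at fi fj
  generalize b.coord j = g at gi gj
  generalize b i = u at *
  generalize b j = v at *
  let S : Option (ZMod p) → Subgroup G := fun o =>
    AddSubgroup.toSubgroup'
      (match o with
        | none => LinearMap.ker f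
        | some a => LinearMap.ker (g + a • f) : Submodule (ZMod p) (Additive G)).toAddSubgroup
  have hSn : ∀ x : G, x ∈ S none ↔ f (Additive.ofMul x) = 0 := fun x => Iff.rfl
  have hSs : ∀ (a) (x : G), x ∈ S (some a) ↔
    g (Additive.ofMul x) + a * f (Additive.ofMul x) = 0 := fun a x => Iff.rfl
  refine ⟨Set.range S, aux_isDomSet _ ?_ ?_, ?_⟩
  · rintro _ ⟨o, rfl⟩
    rcases o with _ | a
    · constructor
      · intro h
        have : v.toMul ∈ S none := (hSn _).mpr fj
        rw [h, Subgroup.mem_bot] at this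
        have hv : v = 0 := this
        rw [hv, map_zero] at gj
        exact zero_ne_one gj
      · intro h
        have : u.toMul ∈ S none := h ▸ Subgroup.mem_top _
        have := (hSn _).mp this
        rw [ofMul_toMul, fi] at this
        exact one_ne_zero this
    · constructor
      · intro h
        have : (u - a • v).toMul ∈ S (some a) := (hSs _ _).mpr (by simp [fi, fj, gi, gj])
        rw [h, Subgroup.mem_bot] at this
        have hv : u - a • v = 0 := this
        have := congrArg f hv
        simp [fi, fj] at this
      · intro h
        have : v.toMul ∈ S (some a) := h ▸ Subgroup.mem_top _
        have := (hSs _ _).mp this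
        rw [ofMul_toMul, fj, gj] at this
        simp at this
  · intro x _
    by_cases hx : f (Additive.ofMul x) = 0
    · exact ⟨_, ⟨none, rfl⟩, (hSn x).mpr hx⟩
    · refine ⟨_, ⟨some (- g (Additive.ofMul x) / f (Additive.ofMul x)), rfl⟩, (hSs _ x).mpr ?_⟩
      field_simp
      ring
  · rw [← Set.image_univ]
    refine (Set.ncard_image_le).trans ?_
    rw [Set.ncard_univ, Finite.card_option, Nat.card_zmod]

theorem aux_eq {G : Type*} [CommGroup G] [Finite G]
    (hG : ∃ K : Subgroup G, K ≠ ⊥ ∧ K ≠ ⊤) {p : ℕ} (hp : p.Prime)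
    (hexp : ∀ g : G, g ^ p = 1) : domNumber G = p + 1 := by
  obtain ⟨D, hD, hc⟩ := aux_upper hG hp hexp
  apply le_antisymm
  · exact (Nat.sInf_le ⟨D, hD, rfl⟩ : domNumber G ≤ D.ncard).trans hc
  · obtain ⟨D', hD', hc'⟩ := Nat.sInf_mem
      (⟨D.ncard, D, hD, rfl⟩ : {n : ℕ | ∃ D : Set (Subgroup G), IsDomSet D ∧ D.ncard = n}.Nonempty)
    have := aux_lower hG hp hexp D' hD'
    rw [hc'] at this
    exact this

/-- A finite abelian group `G` with a proper non-trivial subgroup satisfies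
`γ(G) = p + 1` for a prime `p` iff both the square-free part of `|G|` and the
exponent of `G` are equal to `p`. -/
theorem abelian_domNumber_eq_succ_prime_iff {G : Type*} [CommGroup G] [Finite G]
    (hG : ∃ K : Subgroup G, K ≠ ⊥ ∧ K ≠ ⊤) {p : ℕ} (hp : p.Prime) :
    domNumber G = p + 1 ↔
      ((∏ q ∈ (Nat.card G).primeFactors, q) = p ∧ Monoid.exponent G = p) := by
  constructor
  · intro h
    have hc : Nat.card G ≠ 1 := by
      intro h7
      obtain ⟨K, hK, hK'⟩ := hG
      haveI := (Nat.card_eq_one_iff_unique.mp h7).1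
      exact hK (Subsingleton.elim _ _)
    obtain ⟨q, hq, hqd⟩ := Nat.exists_prime_and_dvd hc
    by_cases hexp : ∀ g : G, g ^ q = 1
    · have h2 := aux_eq hG hq hexp
      have hqp : q = p := by omega
      subst hqp
      haveI := Fact.mk hq
      have hpg : IsPGroup q G := fun g => ⟨1, by simpa using hexp g⟩
      obtain ⟨n, hn⟩ := IsPGroup.iff_card.mp hpg
      have hn0 : n ≠ 0 := by
        rintro rfl
        exact hc (by simpa using hn)
      refine ⟨by rw [hn, Nat.primeFactors_prime_pow hn0 hq, Finset.prod_singleton], ?_⟩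
      rcases (Nat.dvd_prime hq).mp (Monoid.exponent_dvd_of_forall_pow_eq_one hexp) with h | h
      · rw [Monoid.exp_eq_one_iff] at h
        exact absurd (Nat.card_eq_one_iff_unique.mpr ⟨h, ⟨1⟩⟩) hc
      · exact h
    · have := aux_small q hq hqd hexp
      have := hp.two_le
      omega
  · rintro ⟨_, h⟩
    exact aux_eq hG hp (fun g => h ▸ Monoid.pow_exponent_eq_one g)
end

section
/- Let p be a prime and let G be a finite p-group that is not cyclic of order p (and is non-trivial). Then γ(G) ≤ p + 1. -/
theorem aux_exists_hom {G : Type*} [Group G] [Finite G]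
    {p : ℕ} (hp : p.Prime) (M : Subgroup G) [M.Normal] (hM : M.index = p) :
    ∃ a : G →* Multiplicative (ZMod p), a.ker = M := by
  haveI : Fact p.Prime := ⟨hp⟩
  have h1 : Nat.card (G ⧸ M) = p := hM
  have h2 : Nat.card (Multiplicative (ZMod p)) = p := by simp
  let e : G ⧸ M ≃* Multiplicative (ZMod p) := mulEquivOfPrimeCardEq h1 h2
  refine ⟨e.toMonoidHom.comp (QuotientGroup.mk' M), ?_⟩
  ext g
  simp [MonoidHom.mem_ker]

theorem aux_cover {G : Type*} [Group G] (D : Set (Subgroup G))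
    (h1 : ∀ H ∈ D, H ≠ ⊥ ∧ H ≠ ⊤) (h2 : ∀ g : G, ∃ W ∈ D, g ∈ W) : IsDomSet D := by
  refine ⟨h1, fun K hK _ => ?_⟩
  obtain ⟨g, hg, hg1⟩ := K.bot_or_exists_ne_one.resolve_left hK
  obtain ⟨W, hW, hgW⟩ := h2 g
  by_cases h : W = K
  · left; exact h ▸ hW
  · right
    refine ⟨W, hW, h, fun hb => hg1 ?_⟩
    have : g ∈ K ⊓ W := ⟨hg, hgW⟩
    rw [hb] at this
    simpa using this

/-- A non-trivial finite `p`-group that is not cyclic of order `p` has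
domination number at most `p + 1`. -/
theorem pGroup_domNumber_le {G : Type*} [Group G] [Finite G] [Nontrivial G]
    {p : ℕ} (hp : p.Prime) (hG : IsPGroup p G)
    (hnc : ¬(IsCyclic G ∧ Nat.card G = p)) :
    domNumber G ≤ p + 1 := by
  classical
  haveI : Fact p.Prime := ⟨hp⟩
  suffices H : ∃ D : Set (Subgroup G), IsDomSet D ∧ D.ncard ≤ p + 1 by
    obtain ⟨D, hD, hc⟩ := H
    have h : domNumber G ≤ D.ncard := Nat.sInf_le ⟨D, hD, rfl⟩
    exact h.trans hc
  have hcard : Nat.card G ≠ p := fun h => hnc ⟨isCyclic_of_prime_card h, h⟩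
  obtain ⟨n, hn⟩ := IsPGroup.iff_card.1 hG
  have hn2 : 2 ≤ n := by
    have h1 : 1 < Nat.card G := Finite.one_lt_card
    rcases n with _ | _ | n
    · simp [hn] at h1
    · simp [hn] at hcard
    · omega
  obtain ⟨m, rfl⟩ : ∃ m, n = m + 1 := ⟨n - 1, by omega⟩
  have hgt : p < Nat.card G := by
    rw [hn]; calc p = p ^ 1 := (pow_one p).symm
      _ < _ := Nat.pow_lt_pow_right hp.one_lt (by omega)
  have hmax : ∀ K : Subgroup G, K ≠ ⊤ → ∃ M : Subgroup G, K ≤ M ∧ M.index = p := by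
    intro K hK
    obtain ⟨k, hk⟩ := IsPGroup.iff_card.1 (hG.to_subgroup K)
    have hkm : k ≤ m := by
      by_contra hlt
      apply hK
      apply Subgroup.eq_top_of_le_card
      rw [hn, hk]
      exact Nat.pow_le_pow_right hp.pos (by omega)
    obtain ⟨M, hM, hKM⟩ := Sylow.exists_subgroup_card_pow_prime_le p
      (hn ▸ pow_dvd_pow p (Nat.le_succ m)) K hk hkm
    refine ⟨M, hKM, ?_⟩
    have := M.card_mul_index
    rw [hM, hn, pow_succ] at this
    exact Nat.eq_of_mul_eq_mul_left (pow_pos hp.pos m) this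
  have hnorm : ∀ M : Subgroup G, M.index = p → M.Normal := by
    intro M hM
    apply Subgroup.normal_of_index_eq_minFac_card
    rw [hM, hn, hp.pow_minFac (by omega)]
  have hnt : ∀ M : Subgroup G, M.index = p → M ≠ ⊥ ∧ M ≠ ⊤ := by
    rintro M hM
    constructor
    · rintro rfl
      rw [Subgroup.index_bot] at hM
      exact hcard hM
    · rintro rfl
      rw [Subgroup.index_top] at hM
      exact hp.one_lt.ne hM
  obtain ⟨M, -, hM⟩ := hmax ⊥ bot_ne_top
  by_cases huniq : ∀ L : Subgroup G, L.index = p → L = M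
  · refine ⟨{M}, ⟨?_, ?_⟩, by simp⟩
    · rintro H rfl; exact hnt _ hM
    · intro K hK hK'
      obtain ⟨L, hL, hLi⟩ := hmax K hK'
      rw [huniq L hLi] at hL
      by_cases h : M = K
      · left; exact h.symm
      · right; exact ⟨M, rfl, h, by rwa [inf_eq_left.2 hL]⟩
  push Not at huniq
  obtain ⟨L, hL, hne⟩ := huniq
  haveI := hnorm M hM
  haveI := hnorm L hL
  obtain ⟨a, ha⟩ := aux_exists_hom hp M hM
  obtain ⟨b, hb⟩ := aux_exists_hom hp L hL
  let f : ZMod p → Subgroup G := fun c => (b * a ^ c.val).ker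
  have hf : ∀ c g, g ∈ f c ↔ (b g).toAdd + c * (a g).toAdd = 0 := by
    intro c g
    simp only [f, MonoidHom.mem_ker, MonoidHom.mul_apply, MonoidHom.pow_apply]
    rw [← toAdd_eq_zero, toAdd_mul, toAdd_pow, nsmul_eq_mul, ZMod.natCast_zmod_val]
  refine ⟨insert M (Set.range f), aux_cover _ ?_ ?_, ?_⟩
  · rintro H (rfl | ⟨c, rfl⟩)
    · exact hnt _ hM
    · constructor
      · intro h
        have hinj := (MonoidHom.ker_eq_bot_iff _).1 h
        have := Nat.card_le_card_of_injective _ hinj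
        simp at this
        omega
      · intro h
        apply hne
        have hle : M ≤ L := by
          intro g hg
          have h1 : g ∈ f c := h ▸ Subgroup.mem_top g
          rw [hf] at h1
          rw [← ha, MonoidHom.mem_ker] at hg
          rw [← hb, MonoidHom.mem_ker, ← toAdd_eq_zero]
          simpa [hg] using h1
        symm
        apply Subgroup.eq_of_le_of_card_ge hle
        have e1 := M.card_mul_index
        have e2 := L.card_mul_index
        rw [hM] at e1
        rw [hL, ← e1] at e2
        exact (Nat.eq_of_mul_eq_mul_right hp.pos e2).le
  · intro g
    by_cases h : (a g).toAdd = 0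
    · refine ⟨M, Or.inl rfl, ?_⟩
      rw [← ha, MonoidHom.mem_ker, ← toAdd_eq_zero, h]
    · refine ⟨f (-(b g).toAdd / (a g).toAdd), Or.inr ⟨_, rfl⟩, ?_⟩
      rw [hf]
      field_simp
      ring
  · refine (Set.ncard_insert_le _ _).trans ?_
    have : (Set.range f).ncard ≤ p := by
      rw [← Set.image_univ]
      refine (Set.ncard_image_le (Set.toFinite _)).trans ?_
      simp
    omega
end

section
/- Let G be a finite nilpotent group whose order is divisible by at least two distinct primes (so G is not a p-group for any prime p). Then γ(G) ≤ 2. -/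
/-- A finite nilpotent group whose order is divisible by at least two distinct
primes has domination number at most `2`. -/
theorem nilpotent_domNumber_le_two {G : Type*} [Group G] [Finite G]
    [Group.IsNilpotent G]
    (h : ∃ p q : ℕ, p.Prime ∧ q.Prime ∧ p ≠ q ∧ p ∣ Nat.card G ∧ q ∣ Nat.card G) :
    domNumber G ≤ 2 := by
  classical
  obtain ⟨p, q, hp, hq, hpq, hpG, hqG⟩ := h
  have := Fact.mk hp
  have := Fact.mk hq
  have hnorm : ∀ (r : ℕ) (hr : Fact r.Prime) (S : Sylow r G), (S : Subgroup G).Normal := by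
    intro r hr S
    infer_instance
  obtain ⟨P⟩ : Nonempty (Sylow p G) := inferInstance
  have hPn : (P : Subgroup G).Normal := hnorm p inferInstance P
  obtain ⟨n, hn⟩ := IsPGroup.iff_card.mp P.isPGroup'
  have hcop : ∀ r : ℕ, r.Prime → r ≠ p → Nat.Coprime r (Nat.card (P : Subgroup G)) := by
    intro r hr hrp
    rw [hn]
    exact Nat.Coprime.pow_right _ ((Nat.coprime_primes hr hp).mpr hrp)
  obtain ⟨C, hC⟩ := Subgroup.exists_right_complement'_of_coprime (N := (P : Subgroup G))
    P.card_coprime_index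
  have hcard : Nat.card (P : Subgroup G) * Nat.card C = Nat.card G := hC.card_mul_card
  have hpP : p ∣ Nat.card (P : Subgroup G) := P.dvd_card_of_dvd_card hpG
  have hqC : q ∣ Nat.card C := by
    rw [← hcard] at hqG
    exact (hcop q hq hpq.symm).dvd_of_dvd_mul_left hqG
  have hpos : 0 < Nat.card G := Nat.card_pos
  have hPbot : (P : Subgroup G) ≠ ⊥ := by
    intro h
    rw [h, Subgroup.card_bot] at hpP
    exact hp.one_lt.ne' (Nat.dvd_one.mp hpP)
  have hCbot : C ≠ ⊥ := by
    intro h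
    rw [h, Subgroup.card_bot] at hqC
    exact hq.one_lt.ne' (Nat.dvd_one.mp hqC)
  have hPtop : (P : Subgroup G) ≠ ⊤ := by
    intro h
    have h1 := hcop q hq hpq.symm
    rw [h, Subgroup.card_top] at h1
    exact hq.one_lt.ne' (Nat.Coprime.eq_one_of_dvd h1 hqG)
  have hCtop : C ≠ ⊤ := by
    intro h
    rw [h, Subgroup.card_top] at hcard
    have : Nat.card (P : Subgroup G) = 1 := by
      exact Nat.eq_of_mul_eq_mul_right hpos (by simpa using hcard)
    rw [this] at hpP
    exact hp.one_lt.ne' (Nat.dvd_one.mp hpP)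
  have hRC : ∀ (r : ℕ) (hr : Fact r.Prime) (R : Sylow r G), r ≠ p → (R : Subgroup G) ≤ C := by
    intro r hr R hrp
    have := hnorm r hr R
    obtain ⟨m, hm⟩ := IsPGroup.iff_card.mp R.isPGroup'
    have h1 : Nat.card (R : Subgroup G) ∣ Nat.card C := by
      have h2 : Nat.card (R : Subgroup G) ∣ Nat.card (P : Subgroup G) * Nat.card C := by
        rw [hcard]; exact Subgroup.card_subgroup_dvd_card _
      refine Nat.Coprime.dvd_of_dvd_mul_left ?_ h2
      rw [hm]
      exact Nat.Coprime.pow_left _ (hcop r hr.out hrp)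
    have h3 : (R : Subgroup G).relIndex C ∣ (R : Subgroup G).index :=
      Subgroup.relIndex_dvd_index_of_normal _ _
    have h4 : Nat.card ((R : Subgroup G) ⊓ C : Subgroup G) * (R : Subgroup G).relIndex C
        = Nat.card C := by
      rw [← Subgroup.inf_relIndex_right]
      rw [← Subgroup.relIndex_bot_left, ← Subgroup.relIndex_bot_left]
      exact Subgroup.relIndex_mul_relIndex _ _ _ bot_le inf_le_right
    rw [← h4] at h1
    have h5 := (Nat.Coprime.of_dvd_right h3 R.card_coprime_index).dvd_of_dvd_mul_right h1
    have h6 := Subgroup.eq_of_le_of_card_ge (inf_le_left : (R : Subgroup G) ⊓ C ≤ R)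
      (Nat.le_of_dvd Nat.card_pos h5)
    exact inf_eq_left.mp h6
  have hdom : IsDomSet ({(P : Subgroup G), C} : Set (Subgroup G)) := by
    refine ⟨?_, ?_⟩
    · rintro H (rfl | rfl)
      · exact ⟨hPbot, hPtop⟩
      · exact ⟨hCbot, hCtop⟩
    · intro K hK _
      by_cases hKD : K ∈ ({(P : Subgroup G), C} : Set (Subgroup G))
      · exact Or.inl hKD
      right
      have key : ∃ W ∈ ({(P : Subgroup G), C} : Set (Subgroup G)), K ⊓ W ≠ ⊥ := by
        have hK1 : Nat.card K ≠ 1 := fun h => hK (Subgroup.card_eq_one.mp h)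
        obtain ⟨r, hr, hrK⟩ := Nat.exists_prime_and_dvd hK1
        have := Fact.mk hr
        obtain ⟨x, hx⟩ := exists_prime_orderOf_dvd_card' r hrK
        have hx' : orderOf (x : G) = r := by simpa using hx
        have hx1 : (x : G) ≠ 1 := by
          intro h
          rw [h, orderOf_one] at hx'
          exact hr.one_lt.ne hx'
        have hpg : IsPGroup r (Subgroup.zpowers (x : G)) :=
          IsPGroup.of_card (n := 1) (by rw [Nat.card_zpowers, hx', pow_one])
        obtain ⟨R, hR⟩ := hpg.exists_le_sylow
        have hxR : (x : G) ∈ (R : Subgroup G) := hR (Subgroup.mem_zpowers _)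
        have fin : ∀ W : Subgroup G, (x : G) ∈ W → K ⊓ W ≠ ⊥ := by
          intro W hW h
          have : (x : G) ∈ K ⊓ W := ⟨x.2, hW⟩
          rw [h] at this
          exact hx1 (Subgroup.mem_bot.mp this)
        by_cases hrp : r = p
        · subst hrp
          refine ⟨P, by simp, fin _ ?_⟩
          have := Sylow.unique_of_normal P hPn
          rw [Subsingleton.elim P R]
          exact hxR
        · exact ⟨C, by simp, fin _ (hRC r inferInstance R hrp hxR)⟩
      obtain ⟨W, hW, hKW⟩ := key
      exact ⟨W, hW, fun h => hKD (h ▸ hW), hKW⟩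
  calc domNumber G ≤ ({(P : Subgroup G), C} : Set (Subgroup G)).ncard :=
        Nat.sInf_le ⟨_, hdom, rfl⟩
    _ ≤ 2 := by simpa using Set.ncard_insert_le (P : Subgroup G) {C}
end

section
/- Let n ≥ 2 be an integer, let D_{2n} be the dihedral group of order 2n, and let p be the smallest prime dividing n. Then γ(D_{2n}) = p if p² divides n, and γ(D_{2n}) = p + 1 otherwise. -/
namespace DihDom
open DihedralGroup Classical

/-- rotation part -/
def rotPart {n : ℕ} (W : Subgroup (DihedralGroup n)) : AddSubgroup (ZMod n) where
  carrier := {k | r k ∈ W}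
  zero_mem' := by simp
  add_mem' := by
    intro a b ha hb
    simpa using W.mul_mem ha hb
  neg_mem' := by
    intro a ha
    simpa using W.inv_mem ha

/-- reflections in W -/
noncomputable def refl {n : ℕ} [NeZero n] (W : Subgroup (DihedralGroup n)) : Finset (ZMod n) :=
  Finset.univ.filter (fun j => sr j ∈ W)

theorem mem_refl {n : ℕ} [NeZero n] (W : Subgroup (DihedralGroup n)) (j : ZMod n) :
    j ∈ refl W ↔ sr j ∈ W := by simp [refl]

theorem mem_rotPart {n : ℕ} (W : Subgroup (DihedralGroup n)) (j : ZMod n) :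
    j ∈ rotPart W ↔ r j ∈ W := Iff.rfl

theorem card_refl {n : ℕ} [NeZero n] (W : Subgroup (DihedralGroup n)) (i : ZMod n)
    (hi : sr i ∈ W) : (refl W).card = Nat.card (rotPart W) := by
  rw [← Set.ncard_coe_finset, ← Nat.card_coe_set_eq]
  refine Nat.card_congr ⟨fun x => ⟨x.1 - i, ?_⟩, fun k => ⟨i + k.1, ?_⟩, ?_, ?_⟩
  · have := (mem_refl W x.1).1 x.2
    rw [mem_rotPart]
    simpa using W.mul_mem hi this
  · have := (mem_rotPart W k.1).1 k.2
    rw [Finset.mem_coe, mem_refl]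
    simpa using W.mul_mem hi this
  · intro x; simp
  · intro x; simp

theorem p_card {n : ℕ} [NeZero n] {p : ℕ} (hmin : ∀ q : ℕ, q.Prime → q ∣ n → p ≤ q)
    (W : Subgroup (DihedralGroup n)) (hW : W ≠ ⊤) : p * (refl W).card ≤ n := by
  by_cases h : ∃ i, sr i ∈ W
  · obtain ⟨i, hi⟩ := h
    rw [card_refl W i hi]
    have h1 := (rotPart W).card_mul_index
    rw [Nat.card_zmod] at h1
    have h2 : (rotPart W).index ≠ 1 := by
      intro h
      rw [AddSubgroup.index_eq_one] at h
      apply hW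
      have hr : ∀ k, r k ∈ W := by
        intro k
        rw [← mem_rotPart, h]; trivial
      rw [eq_top_iff]
      rintro (k | k) -
      · exact hr k
      · simpa using W.mul_mem hi (hr (k - i))
    have h3 := hmin _ (Nat.minFac_prime h2)
      ((Nat.minFac_dvd _).trans (Dvd.intro_left _ h1))
    have h4 : 0 < (rotPart W).index := by
      rcases Nat.eq_zero_or_pos (rotPart W).index with h | h
      · rw [h] at h1; exact absurd h1.symm (NeZero.ne n)
      · exact h
    have h5 := Nat.minFac_le h4
    calc p * Nat.card (rotPart W) ≤ (rotPart W).index * Nat.card (rotPart W) := by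
          gcongr; omega
      _ = n := by rw [mul_comm, h1]
  · push Not at h
    have : refl W = ∅ := by
      ext j; simp [mem_refl, h]
    simp [this]

theorem exists_sr {n : ℕ} (hn : 2 ≤ n) {D : Set (Subgroup (DihedralGroup n))} (hD : IsDomSet D)
    (j : ZMod n) : ∃ W ∈ D, sr j ∈ W := by
  have hz : ∀ x ∈ Subgroup.zpowers (sr j), x = 1 ∨ x = sr j := by
    intro x hx
    obtain ⟨k, rfl⟩ := Subgroup.mem_zpowers_iff.1 hx
    rcases Int.even_or_odd' k with ⟨m, rfl | rfl⟩
    · left; rw [zpow_mul]; norm_cast; rw [sq, sr_mul_self, one_zpow]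
    · right; rw [zpow_add, zpow_mul]; norm_cast; rw [sq, sr_mul_self, one_zpow, one_mul, pow_one]
  have : Fact (1 < n) := ⟨hn⟩
  have hb : Subgroup.zpowers (sr j) ≠ ⊥ := by
    rw [Ne, Subgroup.zpowers_eq_bot]
    simp [one_def, -r_zero]
  have ht : Subgroup.zpowers (sr j) ≠ ⊤ := by
    intro h
    rcases hz (r 1) (h ▸ Subgroup.mem_top _) with h | h
    · simp [one_def, -r_zero] at h
    · cases h
  rcases hD.2 (Subgroup.zpowers (sr j)) hb ht with h | ⟨W, hW, -, h⟩
  · exact ⟨_, h, Subgroup.mem_zpowers _⟩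
  · refine ⟨W, hW, ?_⟩
    obtain ⟨⟨x, hx⟩, hx1⟩ := (Subgroup.ne_bot_iff_exists_ne_one).1 h
    have hx1 : x ≠ 1 := fun h => hx1 (Subtype.ext h)
    rcases hz x hx.1 with h | h
    · exact absurd h hx1
    · rw [← h]; exact hx.2

theorem le_sum {n : ℕ} [NeZero n] (hn : 2 ≤ n) {D : Set (Subgroup (DihedralGroup n))}
    (hD : IsDomSet D) : n ≤ ∑ W ∈ D.toFinite.toFinset, (refl W).card := by
  have : (Finset.univ : Finset (ZMod n)) = D.toFinite.toFinset.biUnion refl := by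
    ext j
    obtain ⟨W, hW, h⟩ := exists_sr hn hD j
    simp only [Finset.mem_univ, Finset.mem_biUnion, Set.Finite.mem_toFinset, true_iff]
    exact ⟨W, hW, (mem_refl W j).2 h⟩
  calc n = (Finset.univ : Finset (ZMod n)).card := by simp
    _ ≤ _ := by rw [this]; exact Finset.card_biUnion_le

theorem lower {n : ℕ} [NeZero n] (hn : 2 ≤ n) {p : ℕ}
    (hmin : ∀ q : ℕ, q.Prime → q ∣ n → p ≤ q) {D : Set (Subgroup (DihedralGroup n))}
    (hD : IsDomSet D) : p ≤ D.ncard := by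
  rw [Set.ncard_eq_toFinset_card D D.toFinite]
  have h := le_sum hn hD
  have h2 : ∑ W ∈ D.toFinite.toFinset, p * (refl W).card ≤ ∑ W ∈ D.toFinite.toFinset, n :=
    Finset.sum_le_sum fun W hW => p_card hmin W (hD.1 W (by simpa using hW)).2
  rw [← Finset.mul_sum, Finset.sum_const, smul_eq_mul] at h2
  have h3 : p * n ≤ D.toFinite.toFinset.card * n := (Nat.mul_le_mul_left p h).trans h2
  exact Nat.le_of_mul_le_mul_right h3 (by omega)

theorem lower' {n : ℕ} [NeZero n] (hn : 2 ≤ n) {p : ℕ} (hp : p.Prime) (hdvd : p ∣ n)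
    (hmin : ∀ q : ℕ, q.Prime → q ∣ n → p ≤ q) (hsq : ¬ p ^ 2 ∣ n)
    {D : Set (Subgroup (DihedralGroup n))}
    (hD : IsDomSet D) : p + 1 ≤ D.ncard := by
  have h0 := lower hn hmin hD
  by_contra hcon
  have hc : D.ncard = p := by omega
  rw [Set.ncard_eq_toFinset_card D D.toFinite] at hc
  have h := le_sum hn hD
  have h1 : ∀ W ∈ D.toFinite.toFinset, p * (refl W).card ≤ n :=
    fun W hW => p_card hmin W (hD.1 W (by simpa using hW)).2
  have h2 := Finset.sum_le_sum h1
  have h3 : ∑ W ∈ D.toFinite.toFinset, p * (refl W).card = ∑ W ∈ D.toFinite.toFinset, n := by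
    apply le_antisymm h2
    rw [← Finset.mul_sum, Finset.sum_const, smul_eq_mul, hc]
    exact Nat.mul_le_mul_left p h
  have h4 : ∀ W ∈ D, p * (refl W).card = n := by
    intro W hW
    exact (Finset.sum_eq_sum_iff_of_le h1).1 h3 W (by simpa using hW)
  obtain ⟨m, rfl⟩ := hdvd
  have hm : 0 < m := Nat.pos_of_ne_zero (by rintro rfl; simp at hn)
  have hpm : ¬ p ∣ m := fun h => hsq (by rw [sq]; exact Nat.mul_dvd_mul_left p h)
  have h5 : ∀ W ∈ D, (∃ i, sr i ∈ W) ∧ Nat.card (rotPart W) = m := by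
    intro W hW
    have h6 := Nat.eq_of_mul_eq_mul_left hp.pos (h4 W hW)
    obtain ⟨i, hi⟩ := Finset.card_pos.1 (h6 ▸ hm)
    rw [mem_refl] at hi
    exact ⟨⟨i, hi⟩, by rw [← card_refl W i hi, h6]⟩
  have hz : ∀ x ∈ Subgroup.zpowers (r (m : ZMod (p * m))), ∃ k, x = r k ∧ p • k = 0 := by
    intro x hx
    obtain ⟨k, rfl⟩ := Subgroup.mem_zpowers_iff.1 hx
    refine ⟨_, r_zpow _ _, ?_⟩
    rw [nsmul_eq_mul, ← mul_assoc, ← Nat.cast_mul, ZMod.natCast_self, zero_mul]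
  have hb : Subgroup.zpowers (r (m : ZMod (p * m))) ≠ ⊥ := by
    rw [Ne, Subgroup.zpowers_eq_bot, one_def, r.injEq, ZMod.natCast_eq_zero_iff]
    intro h
    have := Nat.le_of_dvd hm h
    have := hp.two_le
    nlinarith
  have ht : Subgroup.zpowers (r (m : ZMod (p * m))) ≠ ⊤ := by
    intro h
    obtain ⟨k, hk, -⟩ := hz (sr 0) (h ▸ Subgroup.mem_top _)
    cases hk
  rcases hD.2 (Subgroup.zpowers (r (m : ZMod (p * m)))) hb ht with h | ⟨W, hW, -, h⟩
  · obtain ⟨⟨i, hi⟩, -⟩ := h5 _ h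
    obtain ⟨k, hk, -⟩ := hz _ hi
    cases hk
  · apply h
    rw [eq_bot_iff]
    rintro x ⟨hx, hxW⟩
    obtain ⟨k, rfl, hk⟩ := hz _ hx
    have hk2 : m • k = 0 := by
      have := card_nsmul_eq_zero' (G := rotPart W) (x := ⟨k, hxW⟩)
      rw [(h5 W hW).2] at this
      exact congrArg Subtype.val this
    have hg := Nat.dvd_gcd (addOrderOf_dvd_of_nsmul_eq_zero hk)
      (addOrderOf_dvd_of_nsmul_eq_zero hk2)
    rw [((Nat.Prime.coprime_iff_not_dvd hp).2 hpm : Nat.gcd p m = 1), Nat.dvd_one,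
      AddMonoid.addOrderOf_eq_one_iff] at hg
    rw [hg]; exact Subgroup.mem_bot.2 rfl

/-- the dihedral maximal subgroups -/
def H {n p : ℕ} (φ : ZMod n →+* ZMod p) (i : ZMod p) : Subgroup (DihedralGroup n) where
  carrier := {x | match x with
    | r j => φ j = 0
    | sr j => φ j = i}
  one_mem' := by simp [one_def, -r_zero]
  mul_mem' := by
    rintro (a | a) (b | b) ha hb <;> simp_all
  inv_mem' := by
    rintro (a | a) ha <;> simp_all

/-- rotations -/
def Rot (n : ℕ) : Subgroup (DihedralGroup n) where
  carrier := {x | match x with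
    | r _ => True
    | sr _ => False}
  one_mem' := by simp [one_def, -r_zero]
  mul_mem' := by
    rintro (a | a) (b | b) ha hb <;> simp_all
  inv_mem' := by
    rintro (a | a) ha <;> simp_all

theorem r_mem_H {n p : ℕ} (φ : ZMod n →+* ZMod p) (i : ZMod p) (j) :
    r j ∈ H φ i ↔ φ j = 0 := Iff.rfl
theorem sr_mem_H {n p : ℕ} (φ : ZMod n →+* ZMod p) (i : ZMod p) (j) :
    sr j ∈ H φ i ↔ φ j = i := Iff.rfl
theorem r_mem_Rot {n : ℕ} (j) : r j ∈ Rot n := trivial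
theorem sr_mem_Rot {n : ℕ} (j) : sr j ∉ Rot n := fun h => h

theorem dom_aux {G : Type*} [Group G] {D : Set (Subgroup G)} {K : Subgroup G}
    (h : ∃ W ∈ D, ∃ x ∈ K, x ∈ W ∧ x ≠ 1) : K ∈ D ∨ ∃ W ∈ D, W ≠ K ∧ K ⊓ W ≠ ⊥ := by
  obtain ⟨W, hW, x, hK, hx, h1⟩ := h
  by_cases hWK : W = K
  · left; rwa [← hWK]
  · right
    refine ⟨W, hW, hWK, fun h => h1 ?_⟩
    have : x ∈ K ⊓ W := ⟨hK, hx⟩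
    rwa [h, Subgroup.mem_bot] at this

section
variable {n p : ℕ} (φ : ZMod n →+* ZMod p) 

theorem H_inj (hφ : Function.Surjective φ) : Function.Injective (H φ) := by
  intro i i' h
  obtain ⟨j, rfl⟩ := hφ i
  have : sr j ∈ H φ i' := h ▸ (sr_mem_H φ _ j).2 rfl
  exact this

theorem H_ne (hφ : Function.Surjective φ) (hp : 2 ≤ p) (i) : H φ i ≠ ⊥ ∧ H φ i ≠ ⊤ := by
  have : Fact (1 < p) := ⟨hp⟩
  constructor
  · intro h
    obtain ⟨j, rfl⟩ := hφ i
    have : sr j ∈ H φ (φ j) := rfl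
    rw [h, Subgroup.mem_bot] at this
    cases this
  · intro h
    have : r 1 ∈ H φ i := h ▸ Subgroup.mem_top _
    rw [r_mem_H, map_one] at this
    exact one_ne_zero this

theorem dom_of (D : Set (Subgroup (DihedralGroup n))) (hD : ∀ H ∈ D, H ≠ ⊥ ∧ H ≠ ⊤)
    (hH : ∀ i, H φ i ∈ D)
    (hr : ∀ j : ZMod n, j ≠ 0 → ∃ W ∈ D, ∃ k : ℕ, (k : ZMod n) * j ≠ 0 ∧ r ((k : ZMod n) * j) ∈ W) : IsDomSet D := by
  refine ⟨hD, fun K hK _ => dom_aux ?_⟩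
  obtain ⟨⟨x, hx⟩, hx1⟩ := (Subgroup.ne_bot_iff_exists_ne_one).1 hK
  have hx1 : x ≠ 1 := fun h => hx1 (Subtype.ext h)
  rcases x with j | j
  · obtain ⟨W, hW, k, hk, hkW⟩ := hr j (fun h => hx1 (by rw [h]; rfl))
    refine ⟨W, hW, r (k * j), ?_, hkW, ?_⟩
    · have := K.pow_mem hx k
      rwa [r_pow, mul_comm] at this
    · intro h; rw [one_def, r.injEq] at h; exact hk h
  · exact ⟨_, hH (φ j), sr j, hx, rfl, hx1⟩
end

end DihDom

/-- For `n ≥ 2` and `p` the smallest prime dividing `n`, the domination number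
of the dihedral group of order `2n` is `p` if `p²` divides `n`, and `p + 1`
otherwise. -/
theorem dihedral_domNumber (n : ℕ) (hn : 2 ≤ n) (p : ℕ) (hp : p.Prime)
    (hdvd : p ∣ n) (hmin : ∀ q : ℕ, q.Prime → q ∣ n → p ≤ q) :
    domNumber (DihedralGroup n) = if p ^ 2 ∣ n then p else p + 1 := by
  have : NeZero n := ⟨by omega⟩
  have : NeZero p := ⟨hp.ne_zero⟩
  have : Fact (1 < n) := ⟨hn⟩
  have hφ : Function.Surjective (ZMod.castHom hdvd (ZMod p)) := ZMod.castHom_surjective hdvd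
  have hφk : ∀ j : ℕ, ZMod.castHom hdvd (ZMod p) (j : ZMod n) = 0 ↔ p ∣ j := by
    intro j
    rw [map_natCast, ZMod.natCast_eq_zero_iff]
  generalize ZMod.castHom hdvd (ZMod p) = φ at hφ hφk
  have hcard : (Set.range (DihDom.H φ)).ncard = p := by
    rw [Set.ncard_range_of_injective (DihDom.H_inj φ hφ), Nat.card_zmod]
  have hne := DihDom.H_ne φ hφ hp.two_le
  have key : ∀ m, (∃ D : Set (Subgroup (DihedralGroup n)), IsDomSet D ∧ D.ncard = m) →
      (∀ D : Set (Subgroup (DihedralGroup n)), IsDomSet D → m ≤ D.ncard) →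
      domNumber (DihedralGroup n) = m := by
    intro m h1 h2
    apply le_antisymm (Nat.sInf_le h1)
    apply le_csInf ⟨m, h1⟩
    rintro _ ⟨D, hD, rfl⟩
    exact h2 D hD
  split_ifs with hsq
  · refine key p ⟨_, ?_, hcard⟩ (fun D hD => DihDom.lower hn hmin hD)
    refine DihDom.dom_of φ _ ?_ (fun i => ⟨i, rfl⟩) ?_
    · rintro _ ⟨i, rfl⟩; exact hne i
    · intro j hj
      refine ⟨_, ⟨0, rfl⟩, ?_⟩
      by_cases h : φ j = 0
      · exact ⟨1, by simpa using hj, by rw [DihDom.r_mem_H]; simpa using h⟩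
      · refine ⟨p, fun h0 => h ?_, by rw [DihDom.r_mem_H]; simp⟩
        obtain ⟨j, rfl⟩ := ZMod.natCast_zmod_surjective j
        rw [hφk]
        rw [← Nat.cast_mul, ZMod.natCast_eq_zero_iff] at h0
        have := hsq.trans h0
        rw [sq] at this
        exact Nat.dvd_of_mul_dvd_mul_left hp.pos this
  · refine key (p + 1) ⟨insert (DihDom.Rot n) (Set.range (DihDom.H φ)), ?_, ?_⟩
      (fun D hD => DihDom.lower' hn hp hdvd hmin hsq hD)
    · refine DihDom.dom_of φ _ ?_ (fun i => Or.inr ⟨i, rfl⟩) ?_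
      · rintro _ (rfl | ⟨i, rfl⟩)
        · constructor
          · intro h
            have := DihDom.r_mem_Rot (1 : ZMod n)
            rw [h, Subgroup.mem_bot, DihedralGroup.one_def, DihedralGroup.r.injEq] at this
            exact one_ne_zero this
          · intro h
            exact DihDom.sr_mem_Rot (0 : ZMod n) (h ▸ Subgroup.mem_top _)
        · exact hne i
      · intro j hj
        exact ⟨_, Or.inl rfl, 1, by simpa using hj, DihDom.r_mem_Rot _⟩
    · rw [Set.ncard_insert_of_notMem, hcard]
      rintro ⟨i, hi⟩
      obtain ⟨j, rfl⟩ := hφ i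
      have : DihedralGroup.sr j ∈ DihDom.H φ (φ j) := rfl
      rw [hi] at this
      exact DihDom.sr_mem_Rot _ this
end

section
/- Let G be a finite supersolvable group having at least one proper non-trivial subgroup. Then there exists a prime divisor p of |G| such that γ(G) ≤ p + 1. -/
/-- A group `G` is supersolvable if it has a normal series
`1 = s 0 ⊴ s 1 ⊴ ⋯ ⊴ s k = G` in which every term is normal in `G` and every
factor is cyclic. -/
def IsSupersolvableGroup (G : Type*) [Group G] : Prop :=
  ∃ (k : ℕ) (s : Fin (k + 1) → Subgroup G),
    s 0 = ⊥ ∧ s (Fin.last k) = ⊤ ∧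
    (∀ i : Fin k, s i.castSucc ≤ s i.succ) ∧
    (∀ i : Fin (k + 1), (s i).Normal) ∧
    (∀ i : Fin k, ∃ _h : ((s i.castSucc).subgroupOf (s i.succ)).Normal,
      IsCyclic ((s i.succ) ⧸ (s i.castSucc).subgroupOf (s i.succ))) 

lemma aux_between {G : Type*} [Group G] {M N X : Subgroup G} (h : (M.relIndex N).Prime)
    (h1 : M ≤ X) (h2 : X ≤ N) : X ≤ M ∨ N ≤ X := by
  rw [← Subgroup.relIndex_mul_relIndex M X N h1 h2] at h
  rcases Nat.prime_mul_iff.1 h with ⟨_, h⟩ | ⟨_, h⟩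
  · exact Or.inr (Subgroup.relIndex_eq_one.1 h)
  · exact Or.inl (Subgroup.relIndex_eq_one.1 h)

lemma aux_cyclic {Q : Type*} [Group Q] [Finite Q] (C : Subgroup Q) [hC : C.Normal]
    (hc : IsCyclic C) (hne : C ≠ ⊥) :
    ∃ M : Subgroup Q, M.Normal ∧ (M.relIndex C).Prime := by
  have hcomm : ∀ a b : C, a * b = b * a := by
    intro a b
    obtain ⟨g, hg⟩ := hc
    obtain ⟨i, rfl⟩ := hg a
    obtain ⟨j, rfl⟩ := hg b
    exact (Commute.refl g).zpow_zpow i j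
  let inst : CommGroup C := { (inferInstance : Group C) with mul_comm := hcomm }
  have h1 : Nat.card C ≠ 1 := by
    intro h; exact hne (Subgroup.card_eq_one.1 h)
  obtain ⟨p, hp, hpd⟩ := Nat.exists_prime_and_dvd h1
  refine ⟨(powMonoidHom (α := C) p).range.map C.subtype, ⟨?_⟩, ?_⟩
  · rintro _ ⟨_, ⟨c, rfl⟩, rfl⟩ g
    refine ⟨_, ⟨⟨g * c * g⁻¹, hC.conj_mem _ c.2 g⟩, rfl⟩, ?_⟩
    change (g * (c : Q) * g⁻¹) ^ p = g * (c : Q) ^ p * g⁻¹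
    rw [conj_pow]
  · have : (((powMonoidHom (α := C) p).range.map C.subtype).relIndex C)
        = (powMonoidHom (α := C) p).range.index := by
      rw [Subgroup.relIndex, Subgroup.subgroupOf, Subgroup.comap_map_eq_self_of_injective
        C.subtype_injective]
    rw [this, IsCyclic.index_powMonoidHom_range, Nat.gcd_eq_right hpd]
    exact hp

lemma aux_step {G : Type*} [Group G] [Finite G] (hss : IsSupersolvableGroup G)
    (N : Subgroup G) [hN : N.Normal] (hne : N ≠ ⊥) :
    ∃ M : Subgroup G, M.Normal ∧ M ≤ N ∧ (M.relIndex N).Prime := by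
  obtain ⟨k, s, h0, hk, -, hn, hcyc⟩ := hss
  obtain ⟨i, hi1, hi2⟩ : ∃ i : Fin k, N ≤ s i.succ ∧ ¬ N ≤ s i.castSucc := by
    by_contra! hcon
    have : ∀ i : Fin (k + 1), ¬ N ≤ s i := by
      intro i
      induction i using Fin.induction with
      | zero => rw [h0]; exact fun h => hne (le_bot_iff.1 h)
      | succ i ih => exact fun h => ih (hcon i h)
    exact this (Fin.last k) (hk ▸ le_top)
  haveI := hn i.castSucc
  obtain ⟨hnn, ⟨g, hg⟩⟩ := hcyc i
  obtain ⟨t, rfl⟩ := QuotientGroup.mk_surjective g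
  let π := QuotientGroup.mk' (s i.castSucc)
  have hle : N.map π ≤ Subgroup.zpowers (π t) := by
    rintro _ ⟨n, hnN, rfl⟩
    obtain ⟨j, hj⟩ := hg (QuotientGroup.mk ⟨n, hi1 hnN⟩)
    refine ⟨j, ?_⟩
    simp only at hj ⊢
    rw [← QuotientGroup.mk_zpow, QuotientGroup.eq, Subgroup.mem_subgroupOf] at hj
    rw [← map_zpow]
    exact QuotientGroup.eq.2 (by simpa using hj)
  have hc : IsCyclic (N.map π) := Subgroup.isCyclic_of_le hle
  haveI : (N.map π).Normal := hN.map π (QuotientGroup.mk'_surjective _)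
  obtain ⟨M, hM, hp⟩ := aux_cyclic (N.map π) hc (by
    intro h
    rw [Subgroup.map_eq_bot_iff, QuotientGroup.ker_mk'] at h
    exact hi2 h)
  refine ⟨M.comap π ⊓ N, ?_, inf_le_right, ?_⟩
  · haveI := hM.comap π
    infer_instance
  · rw [Subgroup.inf_relIndex_right, Subgroup.relIndex_comap]
    exact hp

lemma aux_sup {G : Type*} [Group G] {M N W : Subgroup G} [hN : N.Normal]
    (hp : (N.relIndex ⊤).Prime) (h : ¬ W ≤ N) (x : G) : ∃ n ∈ N, x * n ∈ W := by
  have h1 : W ⊔ N = ⊤ := by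
    rcases aux_between hp (X := W ⊔ N) le_sup_right le_top with h' | h'
    · exact absurd (le_sup_left.trans h') h
    · exact top_le_iff.1 h'
  have hx : x ∈ W ⊔ N := h1 ▸ Subgroup.mem_top x
  obtain ⟨w, hw, n, hn, rfl⟩ := Subgroup.mem_sup_of_normal_right.1 hx
  exact ⟨n⁻¹, N.inv_mem hn, by simpa using hw⟩

lemma aux_count {G : Type*} [Group G] [Finite G] {M N : Subgroup G} [hM : M.Normal]
    [hN : N.Normal] (hMN : M ≤ N) (hq : (M.relIndex N).Prime) (hp : (N.relIndex ⊤).Prime) :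
    {W : Subgroup G | M ≤ W ∧ ¬ W ≤ M ∧ W ≠ ⊤}.ncard ≤ M.relIndex N + 1 := by
  obtain ⟨x, hx⟩ : ∃ x, x ∉ N := by
    by_contra! h
    exact hp.ne_one (Subgroup.relIndex_eq_one.2 fun x _ => h x)
  let f : N ⧸ M.subgroupOf N → Subgroup G := fun a => M ⊔ Subgroup.zpowers (x * (a.out : N))
  have hsub : {W : Subgroup G | M ≤ W ∧ ¬ W ≤ M ∧ W ≠ ⊤} ⊆ insert N (Set.range f) := by
    rintro W ⟨h1, h2, h3⟩
    by_cases hWN : W = N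
    · exact Or.inl hWN
    right
    have hnot : ¬ N ≤ W := by
      intro h
      rcases aux_between hp h le_top with h' | h'
      · exact hWN (le_antisymm h' h)
      · exact h3 (top_le_iff.1 h')
    have hinf : W ⊓ N ≤ M := by
      rcases aux_between hq (le_inf h1 hMN) inf_le_right with h' | h'
      · exact h'
      · exact absurd (h'.trans inf_le_left) hnot
    have hW : ¬ W ≤ N := fun h => h2 ((le_inf le_rfl h).trans hinf)
    obtain ⟨n, hn, hxn⟩ := aux_sup (M := M) hp hW x
    let a : N ⧸ M.subgroupOf N := QuotientGroup.mk ⟨n, hn⟩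
    have ha : n⁻¹ * (a.out : N) ∈ M := by
      have : (QuotientGroup.mk ⟨n, hn⟩ : N ⧸ M.subgroupOf N) = QuotientGroup.mk a.out :=
        (Quotient.out_eq' a).symm
      rw [QuotientGroup.eq, Subgroup.mem_subgroupOf] at this
      simpa using this
    have hy : x * (a.out : N) ∈ W := by
      have := W.mul_mem hxn (h1 ha)
      simpa [mul_assoc] using this
    refine ⟨a, ?_⟩
    have hle : f a ≤ W := sup_le h1 (by simpa using hy)
    have hyf : x * (a.out : N) ∈ f a :=
      (le_sup_right : _ ≤ f a) (Subgroup.mem_zpowers _)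
    refine le_antisymm hle ?_
    intro w hw
    have hfN : ¬ f a ≤ N := fun h => hx (by
      have := N.mul_mem (h hyf) (N.inv_mem (a.out : N).2)
      simpa using this)
    obtain ⟨m, hm, hwm⟩ := aux_sup (M := M) hp hfN w
    have hmM : m ∈ M := hinf ⟨by simpa using W.mul_mem (W.inv_mem hw) (hle hwm), hm⟩
    have := (f a).mul_mem hwm ((f a).inv_mem ((le_sup_left : M ≤ f a) hmM))
    simpa using this
  calc _ ≤ (insert N (Set.range f)).ncard := Set.ncard_le_ncard hsub (Set.toFinite _)
    _ ≤ (Set.range f).ncard + 1 := Set.ncard_insert_le _ _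
    _ ≤ _ := Nat.add_le_add_right (Finite.card_range_le f) 1

/-- A finite supersolvable group with a proper non-trivial subgroup has
domination number at most `p + 1` for some prime divisor `p` of its order. -/
theorem supersolvable_domNumber_le {G : Type*} [Group G] [Finite G]
    (hss : IsSupersolvableGroup G)
    (hG : ∃ K : Subgroup G, K ≠ ⊥ ∧ K ≠ ⊤) :
    ∃ p : ℕ, p.Prime ∧ p ∣ Nat.card G ∧ domNumber G ≤ p + 1 := by
  obtain ⟨N, hN, -, hp⟩ := aux_step hss (⊤ : Subgroup G) (by
    rintro h
    obtain ⟨K, h1, -⟩ := hG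
    exact h1 (le_bot_iff.1 (h ▸ le_top)))
  have hNb : N ≠ ⊥ := by
    rintro rfl
    obtain ⟨K, h1, h2⟩ := hG
    rcases aux_between hp (bot_le : ⊥ ≤ K) le_top with h | h
    · exact h1 (le_bot_iff.1 h)
    · exact h2 (top_le_iff.1 h)
  have hNt : N ≠ ⊤ := by
    rintro rfl
    exact hp.ne_one (Subgroup.relIndex_self _)
  obtain ⟨M, hM, hMN, hq⟩ := aux_step hss N hNb
  have hNM : ¬ N ≤ M := fun h => hq.ne_one (Subgroup.relIndex_eq_one.2 h)
  refine ⟨M.relIndex N, hq, (Subgroup.relIndex_dvd_card M N).trans (Subgroup.card_subgroup_dvd_card N), ?_⟩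
  refine le_trans (Nat.sInf_le ⟨{W : Subgroup G | M ≤ W ∧ ¬ W ≤ M ∧ W ≠ ⊤}, ⟨?_, ?_⟩, rfl⟩)
    (aux_count hMN hq hp)
  · rintro W ⟨-, h2, h3⟩
    exact ⟨fun h => h2 (h ▸ bot_le), h3⟩
  · intro K hKb hKt
    have key : ∀ W ∈ {W : Subgroup G | M ≤ W ∧ ¬ W ≤ M ∧ W ≠ ⊤}, K ⊓ W ≠ ⊥ →
        K ∈ {W : Subgroup G | M ≤ W ∧ ¬ W ≤ M ∧ W ≠ ⊤} ∨
        ∃ W ∈ {W : Subgroup G | M ≤ W ∧ ¬ W ≤ M ∧ W ≠ ⊤}, W ≠ K ∧ K ⊓ W ≠ ⊥ := by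
      intro W hW hne
      by_cases h : W = K
      · exact Or.inl (h ▸ hW)
      · exact Or.inr ⟨W, hW, h, hne⟩
    by_cases hKM : K ≤ M
    · exact key N ⟨hMN, hNM, hNt⟩ (by rwa [inf_eq_left.2 (hKM.trans hMN)])
    by_cases hsup : K ⊔ M = ⊤
    · refine key N ⟨hMN, hNM, hNt⟩ fun hbot => hNM fun n hn => ?_
      have hx : n ∈ K ⊔ M := hsup ▸ Subgroup.mem_top n
      obtain ⟨y, hy, m, hm, rfl⟩ := Subgroup.mem_sup_of_normal_right.1 hx
      have hyN : y ∈ N := by simpa using N.mul_mem hn (N.inv_mem (hMN hm))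
      have : y ∈ K ⊓ N := ⟨hy, hyN⟩
      rw [hbot, Subgroup.mem_bot] at this
      simpa [this] using hm
    · exact key (K ⊔ M) ⟨le_sup_right, fun h => hKM (le_sup_left.trans h), hsup⟩
        (by rwa [inf_eq_left.2 le_sup_left])
end

section
/- For every n, the intersection graph Γ(S_n) of the symmetric group S_n has no dominating set of cardinality 1, and the intersection graph Γ(A_n) of the alternating group A_n has no dominating set of cardinality 1; that is, neither S_n nor A_n possesses a proper non-trivial subgroup intersecting every proper non-trivial subgroup non-trivially. -/
theorem mem_of_prime_order {G : Type*} [Group G] (H : Subgroup G) (hb : H ≠ ⊥)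
    (h : ∀ K : Subgroup G, K ≠ ⊥ → K ≠ ⊤ → H ⊓ K ≠ ⊥) (g : G)
    (hg : (orderOf g).Prime) : g ∈ H := by
  have hne : H ⊓ Subgroup.zpowers g ≠ ⊥ := by
    by_cases ht : Subgroup.zpowers g = ⊤
    · rw [ht, inf_top_eq]; exact hb
    · refine h _ ?_ ht
      intro h0
      rw [Subgroup.zpowers_eq_bot] at h0
      rw [h0, orderOf_one] at hg
      exact Nat.not_prime_one hg
  have hf : Nat.card (Subgroup.zpowers g) = orderOf g := Nat.card_zpowers g
  have : Fact (Nat.card (Subgroup.zpowers g)).Prime := ⟨hf ▸ hg⟩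
  rcases (H.subgroupOf (Subgroup.zpowers g)).eq_bot_or_eq_top_of_prime_card with h1 | h1
  · rw [Subgroup.subgroupOf_eq_bot, disjoint_iff] at h1
    exact absurd h1 hne
  · rw [Subgroup.subgroupOf_eq_top] at h1
    exact h1 (Subgroup.mem_zpowers g)

/-- For every `n`, neither the symmetric group `S_n` nor the alternating group
`A_n` possesses a proper non-trivial subgroup intersecting every proper
non-trivial subgroup non-trivially; i.e. neither `Γ(S_n)` nor `Γ(A_n)` has a
dominating set of cardinality one. -/
theorem symmetric_alternating_not_dominated_by_singleton (n : ℕ) :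
    (¬∃ H : Subgroup (Equiv.Perm (Fin n)), H ≠ ⊥ ∧ H ≠ ⊤ ∧
        ∀ K : Subgroup (Equiv.Perm (Fin n)), K ≠ ⊥ → K ≠ ⊤ → H ⊓ K ≠ ⊥) ∧
    (¬∃ H : Subgroup (alternatingGroup (Fin n)), H ≠ ⊥ ∧ H ≠ ⊤ ∧
        ∀ K : Subgroup (alternatingGroup (Fin n)), K ≠ ⊥ → K ≠ ⊤ → H ⊓ K ≠ ⊥) := by
  constructor
  · rintro ⟨H, hb, ht, h⟩
    apply ht
    rw [eq_top_iff, ← Equiv.Perm.closure_isSwap, Subgroup.closure_le]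
    intro σ hσ
    apply mem_of_prime_order H hb h
    rw [Equiv.Perm.IsSwap.orderOf hσ]
    exact Nat.prime_two
  · rintro ⟨H, hb, ht, h⟩
    apply ht
    have key : alternatingGroup (Fin n) ≤ H.map (alternatingGroup (Fin n)).subtype := by
      conv_lhs => rw [← Equiv.Perm.closure_three_cycles_eq_alternating]
      rw [Subgroup.closure_le]
      intro σ hσ
      refine ⟨⟨σ, Equiv.Perm.IsThreeCycle.mem_alternatingGroup hσ⟩, ?_, rfl⟩
      apply mem_of_prime_order H hb h
      rw [Subgroup.orderOf_mk, Equiv.Perm.IsThreeCycle.orderOf hσ]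
      exact Nat.prime_three
    rw [eq_top_iff]
    intro x _
    obtain ⟨y, hy, hxy⟩ := key x.2
    have : y = x := Subtype.ext hxy
    exact this ▸ hy
end
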